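/- Let 1 ≤ p < ∞ and f ∈ L^p(𝕊^{m-1}×𝔹^m, ℋ_k). Set g = P_B[f] and, for 0 ≤ r < 1, g_r(η,ν) := g(rη,ν) for η ∈ 𝕊^{m-1}, ν ∈ ℝ^m. Then ‖g_r − f‖_p → 0 as r → 1⁻. -/

import Mathlib

noncomputable section

open MeasureTheory Metric Filter Topology
open scoped RealInnerProductSpace

/-- `ℝ^m` as a Euclidean space. -/
abbrev Evec (m : ℕ) : Type := EuclideanSpace ℝ (Fin m)

/-- Partial derivative in the `i`-th coordinate direction. -/
def pdv {m : ℕ} (i : Fin m) (f : Evec m → ℝ) (x : Evec m) : ℝ :=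
  fderiv ℝ f x (EuclideanSpace.single i 1)

/-- Euclidean Laplacian on `ℝ^m`. -/
def lapl {m : ℕ} (f : Evec m → ℝ) (x : Evec m) : ℝ :=
  ∑ i : Fin m, pdv i (pdv i f) x

/-- `p` is a real-valued polynomial function on `ℝ^m`, homogeneous of degree `k` and
harmonic; i.e. `p ∈ ℋ_k`. -/
def IsHk (m k : ℕ) (p : Evec m → ℝ) : Prop :=
  (∃ P : MvPolynomial (Fin m) ℝ, ∀ x : Evec m, p x = MvPolynomial.eval (fun i => x i) P) ∧
  (∀ (c : ℝ) (x : Evec m), p (c • x) = c ^ k * p x) ∧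
  (∀ x : Evec m, lapl p x = 0)

/-- The surface measure `dS` on the unit sphere `𝕊^{m-1}`, as a measure on `ℝ^m`. -/
def sphereM (m : ℕ) : Measure (Evec m) :=
  Measure.map Subtype.val ((volume : Measure (Evec m)).toSphere)

/-- `ω_m`, the surface area of the unit sphere `𝕊^{m-1}`. -/
def omegaS (m : ℕ) : ℝ := (sphereM m Set.univ).toReal

/-- The constant `c_{m,k} = 2(m+2k-2)/((m-2)ω_m)`. -/
def cmk (m k : ℕ) : ℝ := 2 * ((m : ℝ) + 2 * k - 2) / (((m : ℝ) - 2) * omegaS m)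

/-- The reflection `R_a(u) = u - 2⟨a,u⟩a/|a|²` (in Clifford notation `a u a/|a|²`). -/
def reflv {m : ℕ} (a u : Evec m) : Evec m :=
  u - (2 * ⟪a, u⟫ / ‖a‖ ^ 2) • a

/-- `dim ℋ_k`. -/
def hdim (m k : ℕ) : ℕ :=
  Nat.choose (m + k - 1) (m - 1) - Nat.choose (m + k - 3) (m - 1)

/-- `Z` is the reproducing kernel `Z_k` of `ℋ_k` on the unit sphere: a symmetric,
rotation invariant kernel, bounded by `dim ℋ_k` on the unit ball, belonging to `ℋ_k`
in the first variable and reproducing elements of `ℋ_k` from their spherical values. -/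
def IsZk (m k : ℕ) (Z : Evec m → Evec m → ℝ) : Prop :=
  (∀ v : Evec m, IsHk m k (fun u => Z u v)) ∧
  (∀ p : Evec m → ℝ, IsHk m k p → ∀ v : Evec m, (∫ u, Z u v * p u ∂(sphereM m)) = p v) ∧
  (∀ u v : Evec m, Z u v = Z v u) ∧
  (∀ u v : Evec m, ‖u‖ ≤ 1 → ‖v‖ ≤ 1 → |Z u v| ≤ (hdim m k : ℝ)) ∧
  (∀ (A : Evec m ≃ₗᵢ[ℝ] Evec m) (u v : Evec m), Z (A u) (A v) = Z u v)

/-- The point `(x', y) ∈ ℝ^{d+1}` with first `d` coordinates `x'` and last coordinate `y`. -/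
def upP (d : ℕ) (x' : Evec d) (y : ℝ) : Evec (d + 1) :=
  (EuclideanSpace.equiv (Fin (d + 1)) ℝ).symm
    (Fin.snoc (⇑(EuclideanSpace.equiv (Fin d) ℝ) x') y)

/-- The first `d` coordinates of a point of `ℝ^{d+1}`. -/
def downP (d : ℕ) (x : Evec (d + 1)) : Evec d :=
  (EuclideanSpace.equiv (Fin d) ℝ).symm (fun i => x (Fin.castSucc i))

/-- The last coordinate of a point of `ℝ^{d+1}`. -/
def lastP (d : ℕ) (x : Evec (d + 1)) : ℝ := x (Fin.last d)

/-- The Poisson kernel `P_H` for bosonic Laplacians in the upper half-space `ℝ^{d+1}_+`,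
`P_H(x,t,u,v) = c_{m,k} (y/|x-t|^m) Z_k(R_{x-t}(u), v)` with `m = d+1`, `x = (x',y)`,
`t = (t',0)`. -/
def PH (d k : ℕ) (Z : Evec (d + 1) → Evec (d + 1) → ℝ) (x' : Evec d) (y : ℝ)
    (t' : Evec d) (u v : Evec (d + 1)) : ℝ :=
  cmk (d + 1) k * (y / ‖upP d x' y - upP d t' 0‖ ^ (d + 1)) *
    Z (reflv (upP d x' y - upP d t' 0) u) v

/-- The Poisson integral `P_H[f]` in the upper half-space. -/
def PHint (d k : ℕ) (Z : Evec (d + 1) → Evec (d + 1) → ℝ)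
    (f : Evec d → Evec (d + 1) → ℝ) (x' : Evec d) (y : ℝ) (v : Evec (d + 1)) : ℝ :=
  ∫ t' : Evec d, (∫ u, PH d k Z x' y t' u v * f t' u ∂(sphereM (d + 1)))

/-- The Poisson kernel `P_B` for bosonic Laplacians in the unit ball. -/
def PB (m k : ℕ) (Z : Evec m → Evec m → ℝ) (x ζ ω ν : Evec m) : ℝ :=
  (cmk m k / 2) * ((1 - ‖x‖ ^ 2) / ‖x - ζ‖ ^ m) * Z (reflv (x - ζ) ω) ν

/-- The Poisson integral `P_B[h]` in the unit ball. -/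
def PBint (m k : ℕ) (Z : Evec m → Evec m → ℝ) (h : Evec m → Evec m → ℝ)
    (x ν : Evec m) : ℝ :=
  ∫ ζ, (∫ ω, PB m k Z x ζ ω ν * h ζ ω ∂(sphereM m)) ∂(sphereM m)

/-- Partial derivative in the first (`x`) variable. -/
def pd1 {m : ℕ} (i : Fin m) (f : Evec m → Evec m → ℝ) : Evec m → Evec m → ℝ :=
  fun x u => fderiv ℝ (fun x₁ => f x₁ u) x (EuclideanSpace.single i 1)

/-- Partial derivative in the second (`u`) variable. -/
def pd2 {m : ℕ} (i : Fin m) (f : Evec m → Evec m → ℝ) : Evec m → Evec m → ℝ :=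
  fun x u => fderiv ℝ (fun u₁ => f x u₁) u (EuclideanSpace.single i 1)

/-- The bosonic Laplacian `𝒟_k`. -/
def Dk (m k : ℕ) (f : Evec m → Evec m → ℝ) : Evec m → Evec m → ℝ := fun x u =>
  (∑ i : Fin m, pd1 i (pd1 i f) x u)
    - (4 / ((m : ℝ) + 2 * k - 2)) *
        ∑ i : Fin m, ∑ j : Fin m, u i * pd1 i (pd2 j (pd1 j f)) x u
    + (4 * ‖u‖ ^ 2 / (((m : ℝ) + 2 * k - 2) * ((m : ℝ) + 2 * k - 4))) *
        ∑ i : Fin m, ∑ j : Fin m, pd2 i (pd1 i (pd2 j (pd1 j f))) x u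

/-- `f ∈ C²(Ω×𝔹^m, ℋ_k)`: twice continuously differentiable on `Ω × 𝔹^m` and, for each
fixed `x ∈ Ω`, coinciding in the second variable with an element of `ℋ_k`. -/
def C2Hk (m k : ℕ) (Ω : Set (Evec m)) (f : Evec m → Evec m → ℝ) : Prop :=
  ContDiffOn ℝ 2 (fun q : Evec m × Evec m => f q.1 q.2) (Ω ×ˢ ball (0 : Evec m) 1) ∧
  ∀ x ∈ Ω, ∃ q, IsHk m k q ∧ ∀ u ∈ closedBall (0 : Evec m) 1, f x u = q u

/-- The `L^p` norm `(∫_{ℝ^{m-1}} ∫_{𝕊^{m-1}} |f(x',u)|^p dS(u) dx')^{1/p}` (`m = d+1`),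
valued in `ℝ≥0∞`. -/
def lpH (d : ℕ) (p : ℝ) (f : Evec d → Evec (d + 1) → ℝ) : ENNReal :=
  (∫⁻ x' : Evec d, ∫⁻ u, ENNReal.ofReal (|f x' u| ^ p) ∂(sphereM (d + 1))) ^ (1 / p)

/-- `f ∈ L^p(ℝ^{m-1}×𝔹^m, ℋ_k)` (`m = d+1`). -/
def MemLpH (d k : ℕ) (p : ℝ) (f : Evec d → Evec (d + 1) → ℝ) : Prop :=
  Measurable (fun q : Evec d × Evec (d + 1) => f q.1 q.2) ∧
  (∀ x' : Evec d, ∃ q, IsHk (d + 1) k q ∧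
    ∀ u ∈ closedBall (0 : Evec (d + 1)) 1, f x' u = q u) ∧
  lpH d p f < ⊤

/-- The `L^p` norm `(∫_{𝕊^{m-1}} ∫_{𝕊^{m-1}} |h(ζ,ω)|^p dS(ω) dS(ζ))^{1/p}`,
valued in `ℝ≥0∞`. -/
def lpS (m : ℕ) (p : ℝ) (h : Evec m → Evec m → ℝ) : ENNReal :=
  (∫⁻ ζ, ∫⁻ ω, ENNReal.ofReal (|h ζ ω| ^ p) ∂(sphereM m) ∂(sphereM m)) ^ (1 / p)

/-- `h ∈ L^p(𝕊^{m-1}×𝔹^m, ℋ_k)`. -/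
def MemLpS (m k : ℕ) (p : ℝ) (h : Evec m → Evec m → ℝ) : Prop :=
  Measurable (fun q : Evec m × Evec m => h q.1 q.2) ∧
  (∀ ζ : Evec m, ‖ζ‖ = 1 → ∃ q, IsHk m k q ∧
    ∀ ω ∈ closedBall (0 : Evec m) 1, h ζ ω = q ω) ∧
  lpS m p h < ⊤

/-- Iterated partial derivative `D_x^α` in the first variable, for a multi-index `α ∈ ℕ^m`. -/
def Dx {m : ℕ} (α : Fin m → ℕ) (f : Evec m → Evec m → ℝ) : Evec m → Evec m → ℝ :=
  (List.finRange m).foldr (fun i g => (pd1 i)^[α i] g) f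

/-- Iterated partial derivative `D_ν^β` in the second variable, for a multi-index `β ∈ ℕ^m`. -/
def Dv {m : ℕ} (β : Fin m → ℕ) (f : Evec m → Evec m → ℝ) : Evec m → Evec m → ℝ :=
  (List.finRange m).foldr (fun i g => (pd2 i)^[β i] g) f

/-!
For a unit vector `ν` and `h ζ ∈ ℋ_k`, the rotation invariance and the reproducing property of
`Z_k` collapse the inner integral: `P_B[h](x, ν) = C ∫ h ζ (R_{x-ζ} ν) dμ_x(ζ)`, where `μ_x` is the
harmonic measure of the ball at `x` and `C = (m + 2k - 2) / (m - 2)`.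

Seen from `x`, harmonic measure is uniform on unoriented directions: a chord through `x` is cut into
two pieces whose contributions to the Poisson kernel add up to a constant. Hence
`C ∫ q (R_{x-ζ} ν) dμ_x(ζ)` is `C` times the average of `q (R_a ν)` over unit vectors `a`, which for
`q ∈ ℋ_k` is exactly `q ν`. Applied to `q = h η` and `x = r η`, this gives
`g (r η, ν) - h η ν = C ∫ (h ζ (R_{rη-ζ} ν) - h η (R_{rη-ζ} ν)) dμ_{rη}(ζ)`.

By Jensen's inequality the `L^p` norm of the left side is at most `C` times that of `h ∘ S - h ∘ T`,
where `S = (ζ, R_{rη-ζ} ν)` and `T = (η, R_{rη-ζ} ν)` live on the space of triples `(η, ζ, ν)`. The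
kernel `(η, ζ) ↦ dμ_{rη}(ζ)` is symmetric, so both `S` and `T` carry the law of the triples to
surface measure, while the distance between `S` and `T` tends to zero in measure as `r → 1`; for
such pairs `h ∘ S - h ∘ T` tends to zero in `L^p` by density of continuous functions.
-/

/-! ### Surface measure and polar coordinates -/

section SphereMeasure

open Module (finrank)

variable (E : Type*) [NormedAddCommGroup E] [InnerProductSpace ℝ E] [FiniteDimensional ℝ E]
  [MeasurableSpace E] [BorelSpace E]

/-- The surface measure of the unit sphere of `E`, as a measure on `E`. -/
def sphereMeasure : Measure E := (volume : Measure E).toSphere.map Subtype.val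

/-- The radial factor `t ^ n dt` on `t > 0` of Lebesgue measure in polar coordinates. -/
def radialMeasure (n : ℕ) : Measure ℝ :=
  (volume.restrict (Set.Ioi 0)).withDensity fun t => ENNReal.ofReal (t ^ n)

instance : IsFiniteMeasure (sphereMeasure E) := by
  unfold sphereMeasure; infer_instance

instance (n : ℕ) : SFinite (radialMeasure n) := by
  unfold radialMeasure; infer_instance

instance [Nontrivial E] : NeZero (sphereMeasure E) := by
  refine ⟨fun h => (volume : Measure E).toSphere_ne_zero ?_⟩
  exact (Measure.map_eq_zero_iff measurable_subtype_coe.aemeasurable).1 h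

lemma ae_norm_eq_one_sphereMeasure : ∀ᵐ ζ ∂sphereMeasure E, ‖ζ‖ = 1 := by
  rw [sphereMeasure, (MeasurableEmbedding.subtype_coe isClosed_sphere.measurableSet).ae_map_iff]
  exact Eventually.of_forall norm_eq_of_mem_sphere

lemma ae_pos_radialMeasure (n : ℕ) : ∀ᵐ t ∂radialMeasure n, 0 < t :=
  (withDensity_absolutelyContinuous _ _).ae_le (ae_restrict_mem measurableSet_Ioi)

lemma lintegral_radialMeasure (n : ℕ) {f : ℝ → ENNReal} (hf : Measurable f) :
    ∫⁻ t, f t ∂radialMeasure n = ∫⁻ t in Set.Ioi 0, ENNReal.ofReal (t ^ n) * f t :=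
  lintegral_withDensity_eq_lintegral_mul _ (by fun_prop) hf

lemma integral_radialMeasure (n : ℕ) (f : ℝ → ℝ) :
    ∫ t, f t ∂radialMeasure n = ∫ t in Set.Ioi 0, t ^ n * f t := by
  rw [radialMeasure, integral_withDensity_eq_integral_toReal_smul (by fun_prop) (by simp)]
  refine setIntegral_congr_fun measurableSet_Ioi fun t ht => ?_
  simp only [ENNReal.toReal_ofReal (pow_nonneg (le_of_lt ht) n), smul_eq_mul]

lemma measurePreserving_coe_volumeIoiPow (n : ℕ) :
    MeasurePreserving Subtype.val (Measure.volumeIoiPow n) (radialMeasure n) := by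
  refine ⟨measurable_subtype_coe, Measure.ext_of_lintegral _ fun f hf => ?_⟩
  rw [lintegral_map hf measurable_subtype_coe, lintegral_radialMeasure n hf,
    Measure.volumeIoiPow, lintegral_withDensity_eq_lintegral_mul _ (by fun_prop) (by fun_prop)]
  exact lintegral_subtype_comap measurableSet_Ioi fun t => ENNReal.ofReal (t ^ n) * f t

lemma measurePreserving_polar [Nontrivial E] :
    MeasurePreserving (fun q : E × ℝ => q.2 • q.1)
      ((sphereMeasure E).prod (radialMeasure (finrank ℝ E - 1))) volume := by
  have hcoe := (MeasurePreserving.mk measurable_subtype_coe rfl :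
    MeasurePreserving Subtype.val (volume : Measure E).toSphere (sphereMeasure E)).prod
      (measurePreserving_coe_volumeIoiPow (finrank ℝ E - 1))
  have hpolar := (measurePreserving_subtype_coe (measurableSet_singleton 0).compl).comp
    ((volume : Measure E).measurePreserving_homeomorphUnitSphereProd.symm
      (homeomorphUnitSphereProd E).toMeasurableEquiv)
  rw [restrict_compl_singleton] at hpolar
  refine ⟨by fun_prop, ?_⟩
  rw [← hcoe.map_eq, Measure.map_map (by fun_prop) hcoe.measurable]
  exact hpolar.map_eq

variable {E}

lemma lintegral_polar [Nontrivial E] {f : E → ENNReal} (hf : Measurable f) :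
    ∫⁻ x, f x = ∫⁻ ζ, (∫⁻ t in Set.Ioi (0 : ℝ),
      ENNReal.ofReal (t ^ (finrank ℝ E - 1)) * f (t • ζ)) ∂sphereMeasure E := by
  rw [← (measurePreserving_polar E).lintegral_comp hf, lintegral_prod _ (by fun_prop)]
  exact lintegral_congr fun ζ => lintegral_radialMeasure _ (by fun_prop)

lemma integral_mul_comp_norm_of_homogeneous [Nontrivial E] {f : E → ℝ} (hf : Measurable f)
    {d : ℕ} (hfd : ∀ (t : ℝ) x, f (t • x) = t ^ d * f x) {g : ℝ → ℝ} (hg : Measurable g) :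
    ∫ x, f x * g ‖x‖ = (∫ ζ, f ζ ∂sphereMeasure E) *
      ∫ t in Set.Ioi 0, t ^ (finrank ℝ E - 1 + d) * g t := by
  have hcongr : ∀ᵐ q ∂(sphereMeasure E).prod (radialMeasure (finrank ℝ E - 1)),
      f (q.2 • q.1) * g ‖q.2 • q.1‖ = f q.1 * (q.2 ^ d * g q.2) := by
    filter_upwards [Measure.quasiMeasurePreserving_fst.ae (ae_norm_eq_one_sphereMeasure E),
      Measure.quasiMeasurePreserving_snd.ae (ae_pos_radialMeasure _)] with q hζ ht
    rw [hfd, norm_smul, hζ, Real.norm_of_nonneg ht.le, mul_one]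
    ring
  rw [← (measurePreserving_polar E).map_eq, integral_map (by fun_prop) (by fun_prop),
    integral_congr_ae hcongr, integral_prod_mul f fun t => t ^ d * g t, integral_radialMeasure]
  simp only [pow_add, mul_assoc]

lemma mul_setLIntegral_Ioo_inv_pow {n : ℕ} (hn : 0 < n) {c : ℝ} (hc : 0 < c) :
    n * ∫⁻ t in Set.Ioo 0 c⁻¹, ENNReal.ofReal (t ^ (n - 1)) = ENNReal.ofReal (c ^ n)⁻¹ := by
  rw [Measure.restrict_congr_set Ioo_ae_eq_Ioc,
    ← ofReal_integral_eq_lintegral_ofReal (intervalIntegral.intervalIntegrable_pow _).1,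
    ← intervalIntegral.integral_of_le (by positivity), integral_pow,
    ← ENNReal.ofReal_natCast, ← ENNReal.ofReal_mul n.cast_nonneg, ← Nat.cast_add_one,
    Nat.sub_add_cancel hn, zero_pow hn.ne', sub_zero, inv_pow,
    mul_div_cancel₀ _ (Nat.cast_ne_zero.2 hn.ne')]
  filter_upwards [ae_restrict_mem measurableSet_Ioc] with t ht using pow_nonneg ht.1.le _

lemma lintegral_sphereMeasure_mul_inv_pow [Nontrivial E] {G : E → ENNReal} (hG : Measurable G)
    (hG0 : ∀ t : ℝ, 0 < t → ∀ z, G (t • z) = G z) {ρ : E → ℝ} (hρ : Measurable ρ)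
    (hρ1 : ∀ t : ℝ, 0 < t → ∀ z, ρ (t • z) = t * ρ z) (hρpos : ∀ z, ‖z‖ = 1 → 0 < ρ z) :
    ∫⁻ ζ, G ζ * ENNReal.ofReal (ρ ζ ^ finrank ℝ E)⁻¹ ∂sphereMeasure E =
      finrank ℝ E * ∫⁻ z in {z | ρ z < 1}, G z := by
  have hstar : MeasurableSet {z | ρ z < 1} := measurableSet_lt hρ measurable_const
  rw [← lintegral_indicator hstar, lintegral_polar (hG.indicator hstar),
    ← lintegral_const_mul' _ _ (ENNReal.natCast_ne_top _)]
  refine lintegral_congr_ae ?_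
  filter_upwards [ae_norm_eq_one_sphereMeasure E] with ζ hζ
  have hray : ∀ t ∈ Set.Ioi (0 : ℝ), ENNReal.ofReal (t ^ (finrank ℝ E - 1)) *
      {z | ρ z < 1}.indicator G (t • ζ) = (Set.Iio (ρ ζ)⁻¹).indicator
        (fun t => G ζ * ENNReal.ofReal (t ^ (finrank ℝ E - 1))) t := fun t ht => by
    have hiff : ρ (t • ζ) < 1 ↔ t < (ρ ζ)⁻¹ := by
      rw [hρ1 t ht, ← one_div, lt_div_iff₀ (hρpos ζ hζ)]
    simp only [Set.indicator_apply, Set.mem_ofPred_eq, Set.mem_Iio, hiff, hG0 t ht, mul_ite,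
      mul_zero, mul_comm (G ζ)]
  rw [setLIntegral_congr_fun measurableSet_Ioi hray, setLIntegral_indicator measurableSet_Iio,
    Set.inter_comm, Set.Ioi_inter_Iio, lintegral_const_mul _ (by fun_prop), mul_left_comm,
    mul_setLIntegral_Ioo_inv_pow Module.finrank_pos (hρpos ζ hζ)]

lemma lintegral_sphereMeasure_of_homogeneous [Nontrivial E] {G : E → ENNReal}
    (hG : Measurable G) (hG0 : ∀ t : ℝ, 0 < t → ∀ z, G (t • z) = G z) :
    ∫⁻ ζ, G ζ ∂sphereMeasure E = finrank ℝ E * ∫⁻ z in {z | ‖z‖ < 1}, G z := by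
  rw [← lintegral_sphereMeasure_mul_inv_pow hG hG0 measurable_norm
    (fun t ht z => by rw [norm_smul, Real.norm_of_nonneg ht.le]) fun z hz => by simp [hz]]
  refine lintegral_congr_ae ?_
  filter_upwards [ae_norm_eq_one_sphereMeasure E] with ζ hζ
  simp only [hζ, one_pow, inv_one, ENNReal.ofReal_one, mul_one]

lemma lintegral_sphereMeasure [Nontrivial E] {f : E → ENNReal} (hf : Measurable f) :
    ∫⁻ ζ, f ζ ∂sphereMeasure E = finrank ℝ E * ∫⁻ z in {z | ‖z‖ < 1}, f (‖z‖⁻¹ • z) := by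
  rw [← lintegral_sphereMeasure_of_homogeneous (by fun_prop) fun t ht z => by
    rw [norm_smul, Real.norm_of_nonneg ht.le, mul_inv_rev, smul_smul, inv_mul_cancel_right₀ ht.ne']]
  refine lintegral_congr_ae ?_
  filter_upwards [ae_norm_eq_one_sphereMeasure E] with ζ hζ
  simp only [hζ, inv_one, one_smul]

lemma measurePreserving_sphereMeasure [Nontrivial E] (A : E ≃ₗᵢ[ℝ] E) :
    MeasurePreserving A (sphereMeasure E) (sphereMeasure E) := by
  have hA : Measurable A := A.continuous.measurable
  refine ⟨hA, Measure.ext_of_lintegral _ fun f hf => ?_⟩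
  have hball : MeasurableSet {z : E | ‖z‖ < 1} := measurableSet_lt measurable_norm measurable_const
  rw [lintegral_map hf hA, lintegral_sphereMeasure hf,
    lintegral_sphereMeasure (f := fun z => f (A z)) (hf.comp hA),
    ← A.measurePreserving.setLIntegral_comp_preimage hball
      (show Measurable fun z => f (‖z‖⁻¹ • z) by fun_prop)]
  simp

end SphereMeasure
/-! ### Harmonic measure of the unit ball -/

section HarmonicMeasure

open Module (finrank)

variable {E : Type*} [NormedAddCommGroup E] [InnerProductSpace ℝ E]

/-- The map `z ↦ z - ‖z‖ • x`, positively homogeneous of degree one, which sends a point `ζ` of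
the unit sphere to `ζ - x`. It turns the projection of the sphere from the interior point `x` into
a change of variables in `E`. -/
def coneMap (x z : E) : E := z - ‖z‖ • x

lemma coneMap_smul (x z : E) {t : ℝ} (ht : 0 < t) : coneMap x (t • z) = t • coneMap x z := by
  simp [coneMap, norm_smul, abs_of_pos ht, smul_sub, smul_smul]

lemma coneMap_of_norm_eq_one (x : E) {z : E} (hz : ‖z‖ = 1) : coneMap x z = z - x := by
  simp [coneMap, hz]

lemma coneMap_bijective [CompleteSpace E] {x : E} (hx : ‖x‖ < 1) :
    Function.Bijective (coneMap x) := by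
  have hcontr (y : E) : ContractingWith ‖x‖₊ fun z : E => y + ‖z‖ • x := by
    refine ⟨by exact_mod_cast hx, LipschitzWith.of_dist_le_mul fun z w => ?_⟩
    rw [dist_add_left, dist_eq_norm, ← sub_smul, norm_smul, mul_comm, dist_eq_norm, coe_nnnorm]
    gcongr
    exact abs_norm_sub_norm_le z w
  have hfix (y z : E) : coneMap x z = y ↔ Function.IsFixedPt (fun z : E => y + ‖z‖ • x) z := by
    rw [coneMap, sub_eq_iff_eq_add, Function.IsFixedPt, eq_comm]
  refine ⟨fun z w hzw => ?_, fun y => ?_⟩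
  · exact (hcontr _).fixedPoint_unique' ((hfix _ z).1 rfl) ((hfix _ w).1 hzw.symm)
  · exact ⟨_, (hfix y _).2 (hcontr y).fixedPoint_isFixedPt⟩

lemma coneMap_image_compl_zero [CompleteSpace E] {x : E} (hx : ‖x‖ < 1) :
    coneMap x '' {0}ᶜ = {0}ᶜ := by
  rw [Set.image_compl_eq (coneMap_bijective hx)]
  simp [coneMap]

lemma hasFDerivAt_coneMap (x : E) {z : E} (hz : z ≠ 0) :
    HasFDerivAt (coneMap x)
      (ContinuousLinearMap.id ℝ E - (‖z‖⁻¹ • innerSL ℝ z).smulRight x) z := by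
  have hnorm : HasFDerivAt (fun z : E => ‖z‖) (‖z‖⁻¹ • innerSL ℝ z) z := by
    have hsqrt := (hasStrictFDerivAt_norm_sq z).hasFDerivAt.sqrt (by simpa using hz)
    have hz' : ‖z‖ ≠ 0 := norm_ne_zero_iff.2 hz
    convert! hsqrt using 1
    · ext w; simp
    · ext w
      simp only [smul_apply, coe_innerSL_apply, smul_eq_mul, norm_nonneg, Real.sqrt_sq, one_div,
        mul_inv_rev, nsmul_eq_mul, Nat.cast_ofNat]
      field_simp
  exact (hasFDerivAt_id z).sub (hnorm.smul_const x)

lemma det_fderiv_coneMap [FiniteDimensional ℝ E] (x z : E) :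
    (ContinuousLinearMap.id ℝ E - (‖z‖⁻¹ • innerSL ℝ z).smulRight x).det =
      1 - ‖z‖⁻¹ * ⟪x, z⟫ := by
  have htransvection : (ContinuousLinearMap.id ℝ E - (‖z‖⁻¹ • innerSL ℝ z).smulRight x :
      E →L[ℝ] E).toLinearMap =
      LinearMap.transvection (-(‖z‖⁻¹ • innerSL ℝ z) : E →L[ℝ] ℝ).toLinearMap x := by
    ext w
    simp [LinearMap.transvection, sub_eq_add_neg]
  rw [ContinuousLinearMap.det, htransvection, LinearMap.transvection.det]
  simp [real_inner_comm, sub_eq_add_neg]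

lemma inv_norm_mul_inner_lt_one {x : E} (hx : ‖x‖ < 1) (z : E) : ‖z‖⁻¹ * ⟪x, z⟫ < 1 := by
  rcases eq_or_ne z 0 with rfl | hz
  · simp
  · have hz' : 0 < ‖z‖ := norm_pos_iff.2 hz
    rw [inv_mul_lt_iff₀ hz', mul_comm ‖z‖]
    exact (real_inner_le_norm x z).trans_lt (mul_lt_mul_of_pos_right hx hz')

/-- The density of harmonic measure at `x`, as a function of the direction seen from `x`, with
respect to the uniform measure on directions. -/
def angularDensity (x a : E) : ℝ := 1 + ⟪x, a⟫ / √((1 - ‖x‖ ^ 2) * ‖a‖ ^ 2 + ⟪x, a⟫ ^ 2)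

lemma angularDensity_smul (x a : E) {t : ℝ} (ht : 0 < t) :
    angularDensity x (t • a) = angularDensity x a := by
  unfold angularDensity
  rw [norm_smul, Real.norm_of_nonneg ht.le, inner_smul_right,
    show (1 - ‖x‖ ^ 2) * (t * ‖a‖) ^ 2 + (t * ⟪x, a⟫) ^ 2 =
      t ^ 2 * ((1 - ‖x‖ ^ 2) * ‖a‖ ^ 2 + ⟪x, a⟫ ^ 2) by ring,
    Real.sqrt_mul (by positivity), Real.sqrt_sq ht.le, mul_div_mul_left _ _ ht.ne']

lemma angularDensity_add_neg (x a : E) : angularDensity x a + angularDensity x (-a) = 2 := by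
  unfold angularDensity
  rw [norm_neg, inner_neg_right, neg_sq, neg_div]
  ring

lemma angularDensity_nonneg {x : E} (hx : ‖x‖ < 1) (a : E) : 0 ≤ angularDensity x a := by
  have hx2 : 0 ≤ 1 - ‖x‖ ^ 2 := sub_nonneg.2 (pow_le_one₀ (norm_nonneg x) hx.le)
  have hle : |⟪x, a⟫| ≤ √((1 - ‖x‖ ^ 2) * ‖a‖ ^ 2 + ⟪x, a⟫ ^ 2) :=
    Real.abs_le_sqrt (le_add_of_nonneg_left (by positivity))
  have hquot := div_le_one_of_le₀ hle (Real.sqrt_nonneg _)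
  rw [← abs_of_nonneg (Real.sqrt_nonneg (_ + _)), ← abs_div] at hquot
  exact neg_le_iff_add_nonneg'.1 (abs_le.1 hquot).1

variable [FiniteDimensional ℝ E] [MeasurableSpace E] [BorelSpace E]

/-- The Poisson kernel of the unit ball of `E`, normalised so that its integral over the unit
sphere is one. -/
def ballPoissonKernel (x ζ : E) : ℝ :=
  ((sphereMeasure E).real Set.univ)⁻¹ * ((1 - ‖x‖ ^ 2) / ‖x - ζ‖ ^ finrank ℝ E)

/-- The harmonic measure of the unit ball seen from `x`. -/
def harmonicMeasure (x : E) : Measure E :=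
  (sphereMeasure E).withDensity fun ζ => ENNReal.ofReal (ballPoissonKernel x ζ)

instance (x : E) : SFinite (harmonicMeasure x) := by
  unfold harmonicMeasure; infer_instance

lemma lintegral_comp_coneMap [Nontrivial E] {x : E} (hx : ‖x‖ < 1) (F : E → ENNReal) :
    ∫⁻ z, ENNReal.ofReal (1 - ‖z‖⁻¹ * ⟪x, z⟫) * F (coneMap x z) = ∫⁻ y, F y := by
  have hcov := lintegral_image_eq_lintegral_abs_det_fderiv_mul (volume : Measure E)
    (measurableSet_singleton 0).compl (fun z hz => (hasFDerivAt_coneMap x hz).hasFDerivWithinAt)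
    (coneMap_bijective hx).injective.injOn F
  rw [coneMap_image_compl_zero hx, restrict_compl_singleton] at hcov
  rw [hcov]
  refine lintegral_congr fun z => ?_
  rw [det_fderiv_coneMap, abs_of_pos (sub_pos.2 (inv_norm_mul_inner_lt_one hx z))]

lemma lintegral_sphereMeasure_direction [Nontrivial E] {x : E} (hx : ‖x‖ < 1) {G : E → ENNReal}
    (hG : Measurable G) (hG0 : ∀ t : ℝ, 0 < t → ∀ z, G (t • z) = G z) :
    ∫⁻ ζ, G (ζ - x) * ENNReal.ofReal ((1 - ⟪x, ζ⟫) / ‖ζ - x‖ ^ finrank ℝ E) ∂sphereMeasure E =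
      ∫⁻ a, G a ∂sphereMeasure E := by
  have hcont : Measurable (coneMap x) := by unfold coneMap; fun_prop
  have hdet (z : E) : 0 ≤ 1 - ‖z‖⁻¹ * ⟪x, z⟫ := sub_nonneg.2 (inv_norm_mul_inner_lt_one hx z).le
  let H (z : E) : ENNReal := ENNReal.ofReal (1 - ‖z‖⁻¹ * ⟪x, z⟫) * G (coneMap x z)
  calc ∫⁻ ζ, G (ζ - x) * ENNReal.ofReal ((1 - ⟪x, ζ⟫) / ‖ζ - x‖ ^ finrank ℝ E) ∂sphereMeasure E
    _ = ∫⁻ ζ, H ζ * ENNReal.ofReal (‖coneMap x ζ‖ ^ finrank ℝ E)⁻¹ ∂sphereMeasure E := by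
      refine lintegral_congr_ae ?_
      filter_upwards [ae_norm_eq_one_sphereMeasure E] with ζ hζ
      simp only [H]
      rw [coneMap_of_norm_eq_one x hζ, mul_right_comm, ← ENNReal.ofReal_mul (hdet ζ), mul_comm,
        hζ, inv_one, one_mul, div_eq_mul_inv]
    _ = finrank ℝ E * ∫⁻ z in {z | ‖coneMap x z‖ < 1}, H z := by
      refine lintegral_sphereMeasure_mul_inv_pow (by fun_prop) (fun t ht z => ?_) (by fun_prop)
        (fun t ht z => ?_) fun z hz => ?_
      · simp only [H]
        rw [coneMap_smul x z ht, hG0 t ht, norm_smul, Real.norm_of_nonneg ht.le, inner_smul_right]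
        field_simp
      · rw [coneMap_smul x z ht, norm_smul, Real.norm_of_nonneg ht.le]
      · rw [coneMap_of_norm_eq_one x hz, norm_pos_iff, sub_ne_zero]
        exact fun h => hx.ne (h ▸ hz)
    _ = finrank ℝ E * ∫⁻ z in {z | ‖z‖ < 1}, G z := by
      rw [← lintegral_indicator (measurableSet_lt (by fun_prop) (by fun_prop)),
        ← lintegral_indicator (measurableSet_lt (by fun_prop) (by fun_prop)),
        ← lintegral_comp_coneMap hx ({z | ‖z‖ < 1}.indicator G)]
      simp only [H, Set.indicator_apply, Set.mem_ofPred_eq, mul_ite, mul_zero]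
    _ = ∫⁻ a, G a ∂sphereMeasure E := (lintegral_sphereMeasure_of_homogeneous hG hG0).symm

lemma measurable_ballPoissonKernel :
    Measurable fun q : E × E => ballPoissonKernel q.1 q.2 := by
  unfold ballPoissonKernel
  fun_prop

lemma ballPoissonKernel_nonneg {x : E} (hx : ‖x‖ ≤ 1) (ζ : E) : 0 ≤ ballPoissonKernel x ζ := by
  have : 0 ≤ 1 - ‖x‖ ^ 2 := sub_nonneg.2 (pow_le_one₀ (norm_nonneg x) hx)
  unfold ballPoissonKernel
  positivity

lemma ballPoissonKernel_eq_angularDensity {x ζ : E} (hx : ‖x‖ < 1) (hζ : ‖ζ‖ = 1) :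
    ballPoissonKernel x ζ = ((sphereMeasure E).real Set.univ)⁻¹ * (angularDensity x (ζ - x) *
      ((1 - ⟪x, ζ⟫) / ‖ζ - x‖ ^ finrank ℝ E)) := by
  have hc : ⟪x, ζ⟫ < 1 := by simpa [hζ] using inv_norm_mul_inner_lt_one hx ζ
  have hd : ‖ζ - x‖ ^ 2 = 1 - 2 * ⟪x, ζ⟫ + ‖x‖ ^ 2 := by
    rw [norm_sub_sq_real, hζ, real_inner_comm]; ring
  have hi : ⟪x, ζ - x⟫ = ⟪x, ζ⟫ - ‖x‖ ^ 2 := by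
    rw [inner_sub_right, real_inner_self_eq_norm_sq]
  have hs : √((1 - ‖x‖ ^ 2) * ‖ζ - x‖ ^ 2 + ⟪x, ζ - x⟫ ^ 2) = 1 - ⟪x, ζ⟫ := by
    rw [hd, hi, show (1 - ‖x‖ ^ 2) * (1 - 2 * ⟪x, ζ⟫ + ‖x‖ ^ 2) + (⟪x, ζ⟫ - ‖x‖ ^ 2) ^ 2 =
      (1 - ⟪x, ζ⟫) ^ 2 by ring, Real.sqrt_sq (by linarith)]
  have hne : 1 - ⟪x, ζ⟫ ≠ 0 := by linarith
  unfold ballPoissonKernel angularDensity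
  rw [hs, hi, norm_sub_rev]
  field_simp
  ring

lemma lintegral_mul_angularDensity [Nontrivial E] {x : E} (hx : ‖x‖ < 1) {G : E → ENNReal}
    (hG : Measurable G) (hGneg : ∀ a, G (-a) = G a) :
    ∫⁻ a, G a * ENNReal.ofReal (angularDensity x a) ∂sphereMeasure E =
      ∫⁻ a, G a ∂sphereMeasure E := by
  have hdens : Measurable (angularDensity x) := by unfold angularDensity; fun_prop
  have hflip : ∫⁻ a, G a * ENNReal.ofReal (angularDensity x (-a)) ∂sphereMeasure E =
      ∫⁻ a, G a * ENNReal.ofReal (angularDensity x a) ∂sphereMeasure E := by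
    rw [← (measurePreserving_sphereMeasure (LinearIsometryEquiv.neg ℝ)).lintegral_comp
      (by fun_prop : Measurable fun a => G a * ENNReal.ofReal (angularDensity x a))]
    simp [hGneg]
  have hsum (a : E) : G a * ENNReal.ofReal (angularDensity x a) +
      G a * ENNReal.ofReal (angularDensity x (-a)) = 2 * G a := by
    rw [← mul_add, ← ENNReal.ofReal_add (angularDensity_nonneg hx _) (angularDensity_nonneg hx _),
      angularDensity_add_neg, ENNReal.ofReal_ofNat, mul_comm]
  refine (ENNReal.mul_right_inj two_ne_zero ENNReal.ofNat_ne_top).1 ?_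
  rw [two_mul]
  nth_rewrite 2 [← hflip]
  rw [← lintegral_add_left (by fun_prop), ← lintegral_const_mul _ hG]
  exact lintegral_congr hsum

lemma integral_harmonicMeasure {F : Type*} [NormedAddCommGroup F] [NormedSpace ℝ F] {x : E}
    (hx : ‖x‖ ≤ 1) (f : E → F) :
    ∫ ζ, f ζ ∂harmonicMeasure x = ∫ ζ, ballPoissonKernel x ζ • f ζ ∂sphereMeasure E := by
  have hker : Measurable (ballPoissonKernel x) := measurable_ballPoissonKernel.of_uncurry_left
  rw [harmonicMeasure, integral_withDensity_eq_integral_toReal_smul (by fun_prop) (by simp)]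
  simp only [ENNReal.toReal_ofReal (ballPoissonKernel_nonneg hx _)]

lemma map_sub_harmonicMeasure [Nontrivial E] {x : E} (hx : ‖x‖ < 1) {X : Type*}
    [MeasurableSpace X] {ρ : E → X} (hρ : Measurable ρ)
    (hρ0 : ∀ t : ℝ, t ≠ 0 → ∀ a, ρ (t • a) = ρ a) :
    (harmonicMeasure x).map (fun ζ => ρ (x - ζ)) =
      (sphereMeasure E Set.univ)⁻¹ • (sphereMeasure E).map ρ := by
  have hker : Measurable (ballPoissonKernel x) := measurable_ballPoissonKernel.of_uncurry_left
  have hdens : Measurable (angularDensity x) := by unfold angularDensity; fun_prop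
  have hρneg (a : E) : ρ (-a) = ρ a := by simpa using hρ0 (-1) (by norm_num) a
  have hω : ENNReal.ofReal ((sphereMeasure E).real Set.univ)⁻¹ = (sphereMeasure E Set.univ)⁻¹ := by
    rw [ENNReal.ofReal_inv_of_pos measureReal_univ_pos, ofReal_measureReal]
  refine Measure.ext_of_lintegral _ fun f hf => ?_
  rw [lintegral_map hf (by fun_prop), lintegral_smul_measure, lintegral_map hf hρ, harmonicMeasure,
    lintegral_withDensity_eq_lintegral_mul _ (by fun_prop) (by fun_prop),
    ← lintegral_mul_angularDensity hx (G := fun a => f (ρ a)) (by fun_prop) (by simp [hρneg]),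
    ← lintegral_sphereMeasure_direction hx
      (G := fun a => f (ρ a) * ENNReal.ofReal (angularDensity x a)) (by fun_prop) fun t ht a => by
        rw [hρ0 t ht.ne', angularDensity_smul x a ht],
    smul_eq_mul, ← lintegral_const_mul _ (by fun_prop)]
  refine lintegral_congr_ae ?_
  filter_upwards [ae_norm_eq_one_sphereMeasure E] with ζ hζ
  rw [Pi.mul_apply, ballPoissonKernel_eq_angularDensity hx hζ, ← neg_sub ζ x, hρneg,
    ENNReal.ofReal_mul (by positivity), ENNReal.ofReal_mul (angularDensity_nonneg hx _), hω]
  ring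

lemma isProbabilityMeasure_harmonicMeasure [Nontrivial E] {x : E} (hx : ‖x‖ < 1) :
    IsProbabilityMeasure (harmonicMeasure x) := by
  have hmap := map_sub_harmonicMeasure hx (measurable_const (a := ())) fun _ _ _ => rfl
  have huniv := congrArg (fun μ : Measure Unit => μ Set.univ) hmap
  simp only [Measure.map_const, Measure.smul_apply, measure_univ, smul_eq_mul, mul_one,
    ENNReal.inv_mul_cancel (NeZero.ne _) (measure_ne_top _ _)] at huniv
  exact ⟨by simpa using huniv⟩

end HarmonicMeasure

/-! ### Directional derivatives of polynomials -/

section DirectionalDerivative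

open MvPolynomial

variable {ι R : Type*} [CommRing R]

lemma eq_C_of_isHomogeneous_zero {P : MvPolynomial ι R} (hP : P.IsHomogeneous 0) :
    P = C (coeff 0 P) :=
  totalDegree_eq_zero_iff_eq_C.1 (Nat.le_zero.1 hP.totalDegree_le)

lemma eval_smul_of_isHomogeneous {d : ℕ} {P : MvPolynomial ι R} (hP : P.IsHomogeneous d)
    (t : R) (x : ι → R) : eval (t • x) P = t ^ d * eval x P := by
  rw [eval_eq, eval_eq, Finset.mul_sum]
  refine Finset.sum_congr rfl fun e he => ?_
  have hdeg : ∑ i ∈ e.support, e i = d := by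
    rw [← Finsupp.degree_apply, hP.degree_eq_sum_deg_support he, Finsupp.degree_apply]
  simp only [Pi.smul_apply, smul_eq_mul, mul_pow, Finset.prod_mul_distrib,
    Finset.prod_pow_eq_pow_sum, hdeg]
  ring

/-- The restriction of a polynomial to the line `s ↦ a + s • v`, as a polynomial in `s`. -/
def lineRestriction (a v : ι → R) : MvPolynomial ι R →ₐ[R] Polynomial R :=
  aeval fun i => Polynomial.C (a i) + Polynomial.C (v i) * Polynomial.X

lemma eval_lineRestriction (a v : ι → R) (P : MvPolynomial ι R) (s : R) :
    (lineRestriction a v P).eval s = eval (a + s • v) P := by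
  induction P using MvPolynomial.induction_on with
  | C c => simp [lineRestriction]
  | add P Q hP hQ => simp only [map_add, Polynomial.eval_add, hP, hQ]
  | mul_X P j hP =>
    have hX : (lineRestriction a v (X j)).eval s = eval (a + s • v) (X j) := by
      simp [lineRestriction, mul_comm s]
    rw [map_mul, map_mul, Polynomial.eval_mul, hP, hX]

variable [Fintype ι]

/-- The derivative of polynomials in the constant direction `v`. -/
def dirDeriv (v : ι → R) : Derivation R (MvPolynomial ι R) (MvPolynomial ι R) :=
  ∑ i, v i • pderiv i

/-- The linear form `x ↦ ∑ i, v i * x i` as a polynomial. -/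
def linForm (v : ι → R) : MvPolynomial ι R := ∑ i, C (v i) * X i

/-- The Laplacian of polynomials. -/
def polyLaplacian (P : MvPolynomial ι R) : MvPolynomial ι R := ∑ i, pderiv i (pderiv i P)

lemma dirDeriv_apply (v : ι → R) (P : MvPolynomial ι R) :
    dirDeriv v P = ∑ i, C (v i) * pderiv i P :=
  (congrFun (map_sum (Derivation.coeFnAddMonoidHom (R := R) (A := MvPolynomial ι R)
    (M := MvPolynomial ι R)) _ _) P).trans (by simp [C_mul'])

lemma dirDeriv_X (v : ι → R) (i : ι) : dirDeriv v (X i) = C (v i) := by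
  classical
  simp [dirDeriv_apply, pderiv_X, Pi.single_apply]

lemma dirDeriv_single [DecidableEq ι] (i : ι) : dirDeriv (Pi.single i (1 : R)) = pderiv i :=
  derivation_ext fun j => by
    rw [dirDeriv_X, pderiv_X]
    obtain rfl | hij := eq_or_ne i j
    · simp
    · simp [hij.symm]

lemma linForm_single [DecidableEq ι] (i : ι) : linForm (Pi.single i (1 : R)) = X i := by
  simp [linForm, Pi.single_apply]

lemma eval_linForm (v x : ι → R) : eval x (linForm v) = v ⬝ᵥ x := by
  simp [linForm, dotProduct]

lemma dirDeriv_linForm (v : ι → R) : dirDeriv v (linForm v) = C (v ⬝ᵥ v) := by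
  simp [linForm, dirDeriv_X, dotProduct]

lemma dirDeriv_linForm_pow_mul (v : ι → R) (i : ℕ) (Y : MvPolynomial ι R) :
    dirDeriv v (linForm v ^ i * Y) =
      linForm v ^ i * dirDeriv v Y + C (i * (v ⬝ᵥ v)) * (linForm v ^ (i - 1) * Y) := by
  rw [Derivation.leibniz, Derivation.leibniz_pow, dirDeriv_linForm]
  simp only [smul_eq_mul, nsmul_eq_mul, map_mul, map_natCast]
  ring

lemma pderiv_dirDeriv (v : ι → R) (i : ι) (P : MvPolynomial ι R) :
    pderiv i (dirDeriv v P) = dirDeriv v (pderiv i P) := by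
  classical
  have hcomm : ⁅(pderiv i : Derivation R (MvPolynomial ι R) (MvPolynomial ι R)),
      dirDeriv v⁆ = 0 := by
    refine derivation_ext fun j => ?_
    obtain rfl | hij := eq_or_ne j i
    · simp [Derivation.commutator_apply, dirDeriv_X]
    · simp [Derivation.commutator_apply, dirDeriv_X, pderiv_X_of_ne hij]
  rw [← sub_eq_zero, ← Derivation.commutator_apply, hcomm, Derivation.zero_apply]

lemma polyLaplacian_iterate_dirDeriv (v : ι → R) {P : MvPolynomial ι R}
    (hP : polyLaplacian P = 0) (i : ℕ) : polyLaplacian ((dirDeriv v)^[i] P) = 0 := by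
  induction i with
  | zero => exact hP
  | succ i ih =>
    simp only [polyLaplacian] at ih
    simp only [Function.iterate_succ_apply', polyLaplacian, pderiv_dirDeriv]
    rw [← map_sum, ih, map_zero]

lemma isHomogeneous_linForm (v : ι → R) : (linForm v).IsHomogeneous 1 :=
  IsHomogeneous.sum _ _ _ fun i _ => isHomogeneous_C_mul_X (v i) i

lemma isHomogeneous_dirDeriv (v : ι → R) {d : ℕ} {P : MvPolynomial ι R}
    (hP : P.IsHomogeneous d) : (dirDeriv v P).IsHomogeneous (d - 1) := by
  rw [dirDeriv_apply]
  exact IsHomogeneous.sum _ _ _ fun i _ => hP.pderiv.C_mul (v i)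

lemma isHomogeneous_iterate_dirDeriv (v : ι → R) {d : ℕ} {P : MvPolynomial ι R}
    (hP : P.IsHomogeneous d) (i : ℕ) : ((dirDeriv v)^[i] P).IsHomogeneous (d - i) := by
  induction i with
  | zero => exact hP
  | succ i ih =>
    rw [Function.iterate_succ_apply', Nat.sub_add_eq]
    exact isHomogeneous_dirDeriv v ih

lemma dirDeriv_eq_zero_of_isHomogeneous_zero (v : ι → R) {P : MvPolynomial ι R}
    (hP : P.IsHomogeneous 0) : dirDeriv v P = 0 := by
  rw [eq_C_of_isHomogeneous_zero hP, derivation_C]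

lemma derivative_lineRestriction (a v : ι → R) (P : MvPolynomial ι R) :
    Polynomial.derivative (lineRestriction a v P) = lineRestriction a v (dirDeriv v P) := by
  induction P using MvPolynomial.induction_on with
  | C c => simp [lineRestriction]
  | add P Q hP hQ => simp only [map_add, hP, hQ]
  | mul_X P j hP =>
    have hX : Polynomial.derivative (lineRestriction a v (X j)) =
        lineRestriction a v (C (v j)) := by
      simp [lineRestriction]
    simp only [map_mul, Polynomial.derivative_mul, hP, hX, Derivation.leibniz, dirDeriv_X,
      smul_eq_mul, map_add]
    ring

end DirectionalDerivative

section Taylor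

open MvPolynomial

variable {ι K : Type*} [Fintype ι] [Field K] [CharZero K]

lemma coeff_lineRestriction (a v : ι → K) (P : MvPolynomial ι K) (i : ℕ) :
    (lineRestriction a v P).coeff i = (i.factorial : K)⁻¹ * eval a ((dirDeriv v)^[i] P) := by
  have hiter : Polynomial.derivative^[i] (lineRestriction a v P) =
      lineRestriction a v ((dirDeriv v)^[i] P) :=
    (Function.Semiconj.iterate_right (fun Q => (derivative_lineRestriction a v Q).symm) i P).symm
  have hcoeff := Polynomial.coeff_iterate_derivative (p := lineRestriction a v P) (k := i) 0
  rw [hiter, Polynomial.coeff_zero_eq_eval_zero, eval_lineRestriction, zero_smul, add_zero,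
    zero_add, Nat.descFactorial_self, nsmul_eq_mul] at hcoeff
  rw [hcoeff, inv_mul_cancel_left₀ (Nat.cast_ne_zero.2 i.factorial_ne_zero)]

lemma eval_add_eq_sum_iterate_dirDeriv {d : ℕ} {P : MvPolynomial ι K} (hP : P.IsHomogeneous d)
    (a v : ι → K) : eval (a + v) P =
      ∑ i ∈ Finset.range (d + 1), (i.factorial : K)⁻¹ * eval a ((dirDeriv v)^[i] P) := by
  have hdeg : (lineRestriction a v P).natDegree < d + 1 := by
    rw [Nat.lt_succ_iff, Polynomial.natDegree_le_iff_coeff_eq_zero]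
    intro i hi
    obtain ⟨j, rfl⟩ := Nat.exists_eq_add_of_lt hi
    have hconst := isHomogeneous_iterate_dirDeriv v hP (d + j)
    rw [Nat.sub_eq_zero_of_le (Nat.le_add_right d j)] at hconst
    rw [coeff_lineRestriction, Function.iterate_succ_apply',
      dirDeriv_eq_zero_of_isHomogeneous_zero v hconst, map_zero, mul_zero]
  have heval := eval_lineRestriction a v P 1
  rw [one_smul, Polynomial.eval_eq_sum_range' hdeg] at heval
  simp only [← heval, coeff_lineRestriction, one_pow, mul_one]

lemma iterate_dirDeriv_eq_C {d : ℕ} {P : MvPolynomial ι K} (hP : P.IsHomogeneous d)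
    (v : ι → K) : (dirDeriv v)^[d] P = C (d.factorial * eval v P) := by
  have hconst := isHomogeneous_iterate_dirDeriv v hP d
  rw [Nat.sub_self] at hconst
  have htaylor := eval_add_eq_sum_iterate_dirDeriv hP 0 v
  rw [zero_add, Finset.sum_eq_single d, eq_C_of_isHomogeneous_zero hconst, eval_C] at htaylor
  · rw [htaylor, mul_inv_cancel_left₀ (Nat.cast_ne_zero.2 d.factorial_ne_zero)]
    exact eq_C_of_isHomogeneous_zero hconst
  · intro i hi hid
    have hzero := eval_smul_of_isHomogeneous (isHomogeneous_iterate_dirDeriv v hP i) 0 0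
    rw [smul_zero, zero_pow (by grind), zero_mul] at hzero
    rw [hzero, mul_zero]
  · simp

end Taylor

/-! ### Integrals of polynomials over the sphere -/

section Gaussian

/-- The radial moment of order `n` of the Gaussian `exp (-‖x‖ ^ 2)`. -/
def gaussMoment (n : ℕ) : ℝ := ∫ t in Set.Ioi (0 : ℝ), t ^ n * Real.exp (-t ^ 2)

lemma gaussMoment_eq (n : ℕ) : gaussMoment n = 1 / 2 * Real.Gamma ((n + 1) / 2) := by
  rw [gaussMoment, ← integral_rpow_mul_exp_neg_rpow (p := 2) (q := n) (by norm_num)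
    (by linarith [(Nat.cast_nonneg n : (0 : ℝ) ≤ n)])]
  refine setIntegral_congr_fun measurableSet_Ioi fun t _ => ?_
  simp

lemma gaussMoment_pos (n : ℕ) : 0 < gaussMoment n := by
  rw [gaussMoment_eq]
  exact mul_pos one_half_pos (Real.Gamma_pos_of_pos (by positivity))

lemma gaussMoment_add_two (n : ℕ) : 2 * gaussMoment (n + 2) = (n + 1) * gaussMoment n := by
  have hshift : (((n + 2 : ℕ) : ℝ) + 1) / 2 = (n + 1) / 2 + 1 := by push_cast; ring
  rw [gaussMoment_eq, gaussMoment_eq, hshift, Real.Gamma_add_one (by positivity)]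
  ring

lemma integrable_norm_pow_mul_exp_neg_sq {E : Type*} [NormedAddCommGroup E]
    [InnerProductSpace ℝ E] [FiniteDimensional ℝ E] [MeasurableSpace E] [BorelSpace E]
    [Nontrivial E] (d : ℕ) : Integrable (fun x : E => ‖x‖ ^ d * Real.exp (-‖x‖ ^ 2)) := by
  rw [integrable_fun_norm_addHaar volume (f := fun t => t ^ d * Real.exp (-t ^ 2))]
  have hrpow := integrableOn_rpow_mul_exp_neg_mul_sq (b := 1) one_pos
    (s := ((Module.finrank ℝ E - 1 + d : ℕ) : ℝ)) (neg_one_lt_zero.trans_le (Nat.cast_nonneg _))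
  refine hrpow.congr_fun (fun t _ => ?_) measurableSet_Ioi
  simp only [Real.rpow_natCast, pow_add, smul_eq_mul]
  ring_nf

end Gaussian

section PolynomialIntegral

open MvPolynomial

variable {ι : Type*}

lemma continuous_eval_ofLp (P : MvPolynomial ι ℝ) :
    Continuous fun x : EuclideanSpace ℝ ι => eval x.ofLp P :=
  P.continuous_eval.comp (PiLp.continuous_ofLp 2 _)

variable [Fintype ι]

lemma hasFDerivAt_eval (P : MvPolynomial ι ℝ) (x : EuclideanSpace ℝ ι) :
    HasFDerivAt (fun y : EuclideanSpace ℝ ι => eval y.ofLp P)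
      (∑ i, eval x.ofLp (pderiv i P) • (EuclideanSpace.proj i : EuclideanSpace ℝ ι →L[ℝ] ℝ))
      x := by
  classical
  induction P using MvPolynomial.induction_on with
  | C a => simpa using hasFDerivAt_const a x
  | add P Q hP hQ => simpa [add_smul, Finset.sum_add_distrib] using hP.fun_add hQ
  | mul_X P j hP =>
    have hX := (EuclideanSpace.proj j : EuclideanSpace ℝ ι →L[ℝ] ℝ).hasFDerivAt (x := x)
    simpa [pderiv_X, Pi.single_apply, add_smul, mul_smul, Finset.sum_add_distrib,
      Finset.smul_sum, apply_ite, ite_smul] using hP.fun_mul hX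

lemma fderiv_eval_apply (P : MvPolynomial ι ℝ) (x v : EuclideanSpace ℝ ι) :
    fderiv ℝ (fun y : EuclideanSpace ℝ ι => eval y.ofLp P) x v =
      eval x.ofLp (dirDeriv v.ofLp P) := by
  rw [(hasFDerivAt_eval P x).fderiv, dirDeriv_apply]
  simp [mul_comm]

lemma integrable_eval_sphereMeasure (P : MvPolynomial ι ℝ) :
    Integrable (fun ζ : EuclideanSpace ℝ ι => eval ζ.ofLp P) (sphereMeasure _) := by
  obtain ⟨C, hC⟩ := (isCompact_sphere (0 : EuclideanSpace ℝ ι) 1).exists_bound_of_continuousOn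
    (continuous_eval_ofLp P).continuousOn
  refine Integrable.of_bound (continuous_eval_ofLp P).aestronglyMeasurable C ?_
  filter_upwards [ae_norm_eq_one_sphereMeasure (EuclideanSpace ℝ ι)] with ζ hζ
  exact hC ζ (by simpa using hζ)

/-- The integral of a polynomial over the unit sphere. -/
def sphereIntegral : MvPolynomial ι ℝ →ₗ[ℝ] ℝ where
  toFun P := ∫ ζ, eval ζ.ofLp P ∂sphereMeasure (EuclideanSpace ℝ ι)
  map_add' P Q := by
    simp only [map_add]
    exact integral_add (integrable_eval_sphereMeasure P) (integrable_eval_sphereMeasure Q)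
  map_smul' c P := by simp [integral_const_mul]

lemma sphereIntegral_C_mul (c : ℝ) (P : MvPolynomial ι ℝ) :
    sphereIntegral (C c * P) = c * sphereIntegral P := by
  rw [C_mul', map_smul, smul_eq_mul]

lemma sphereIntegral_C (c : ℝ) :
    sphereIntegral (C c : MvPolynomial ι ℝ) =
      (sphereMeasure (EuclideanSpace ℝ ι)).real Set.univ * c := by
  simp [sphereIntegral]

variable [Nonempty ι]

lemma integrable_norm_pow_mul_eval_mul_exp_neg_sq (P : MvPolynomial ι ℝ) (d : ℕ) :
    Integrable fun x : EuclideanSpace ℝ ι => ‖x‖ ^ d * eval x.ofLp P * Real.exp (-‖x‖ ^ 2) := by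
  induction P using MvPolynomial.induction_on generalizing d with
  | C a => simpa [mul_right_comm] using (integrable_norm_pow_mul_exp_neg_sq d).mul_const a
  | add P Q hP hQ => simpa [mul_add, add_mul] using (hP d).fun_add (hQ d)
  | mul_X P j hP =>
    refine (hP (d + 1)).mono ?_ (Eventually.of_forall fun x => ?_)
    · have := continuous_eval_ofLp (P * X j)
      exact Continuous.aestronglyMeasurable (by fun_prop)
    · have hxj : ‖x j‖ ≤ ‖x‖ := PiLp.norm_apply_le x j
      calc ‖‖x‖ ^ d * eval x.ofLp (P * X j) * Real.exp (-‖x‖ ^ 2)‖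
          = ‖x j‖ * ‖‖x‖ ^ d * eval x.ofLp P * Real.exp (-‖x‖ ^ 2)‖ := by
            simp only [map_mul, eval_X, norm_mul]; ring
        _ ≤ ‖x‖ * ‖‖x‖ ^ d * eval x.ofLp P * Real.exp (-‖x‖ ^ 2)‖ := by gcongr
        _ = ‖‖x‖ ^ (d + 1) * eval x.ofLp P * Real.exp (-‖x‖ ^ 2)‖ := by
            simp only [norm_mul, norm_pow, norm_norm]; ring

lemma integrable_eval_mul_exp_neg_sq (P : MvPolynomial ι ℝ) :
    Integrable fun x : EuclideanSpace ℝ ι => eval x.ofLp P * Real.exp (-‖x‖ ^ 2) := by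
  simpa using integrable_norm_pow_mul_eval_mul_exp_neg_sq P 0

lemma integral_eval_mul_exp_neg_sq {d : ℕ} {P : MvPolynomial ι ℝ} (hP : P.IsHomogeneous d) :
    ∫ x : EuclideanSpace ℝ ι, eval x.ofLp P * Real.exp (-‖x‖ ^ 2) =
      sphereIntegral P * gaussMoment (Fintype.card ι - 1 + d) := by
  have hpolar := integral_mul_comp_norm_of_homogeneous (d := d)
    (f := fun x : EuclideanSpace ℝ ι => eval x.ofLp P) (g := fun t => Real.exp (-t ^ 2))
    (continuous_eval_ofLp P).measurable (fun t x => eval_smul_of_isHomogeneous hP t x.ofLp)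
    (by fun_prop)
  rwa [finrank_euclideanSpace] at hpolar

lemma integral_dirDeriv_mul_exp_neg_sq (v : ι → ℝ) (P : MvPolynomial ι ℝ) :
    ∫ x : EuclideanSpace ℝ ι, eval x.ofLp (dirDeriv v P) * Real.exp (-‖x‖ ^ 2) =
      2 * ∫ x : EuclideanSpace ℝ ι, eval x.ofLp (linForm v * P) * Real.exp (-‖x‖ ^ 2) := by
  have hexp (x : EuclideanSpace ℝ ι) : HasFDerivAt
      (fun x : EuclideanSpace ℝ ι => Real.exp (-‖x‖ ^ 2))
      ((-(2 * Real.exp (-‖x‖ ^ 2))) • innerSL ℝ x : EuclideanSpace ℝ ι →L[ℝ] ℝ) x := by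
    refine (hasStrictFDerivAt_norm_sq x).hasFDerivAt.neg.exp.congr_fderiv ?_
    ext y
    simp only [Pi.neg_apply, smul_neg, neg_apply, smul_apply, coe_innerSL_apply, nsmul_eq_mul,
      Nat.cast_ofNat, smul_eq_mul, neg_smul, neg_inj]
    ring
  have hmul (x : EuclideanSpace ℝ ι) :
      eval x.ofLp P * fderiv ℝ (fun x => Real.exp (-‖x‖ ^ 2)) x (WithLp.toLp 2 v) =
        -2 * (eval x.ofLp (linForm v * P) * Real.exp (-‖x‖ ^ 2)) := by
    have hinner : ⟪x, WithLp.toLp 2 v⟫ = v ⬝ᵥ x.ofLp := by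
      simp [EuclideanSpace.inner_eq_star_dotProduct]
    rw [(hexp x).fderiv, map_mul, eval_linForm, ← hinner]
    simp only [neg_smul, neg_apply, smul_apply, coe_innerSL_apply, smul_eq_mul, mul_neg, neg_mul,
      neg_inj]
    ring
  have hparts := integral_mul_fderiv_eq_neg_fderiv_mul_of_integrable
    (μ := volume) (f := fun x : EuclideanSpace ℝ ι => eval x.ofLp P)
    (g := fun x => Real.exp (-‖x‖ ^ 2)) (v := WithLp.toLp 2 v)
    (by simpa only [fderiv_eval_apply] using integrable_eval_mul_exp_neg_sq (dirDeriv v P))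
    (by simpa only [hmul] using (integrable_eval_mul_exp_neg_sq (linForm v * P)).const_mul _)
    (integrable_eval_mul_exp_neg_sq P)
    (fun x _ => (hasFDerivAt_eval P x).differentiableAt)
    (fun x _ => (hexp x).differentiableAt)
  simp only [hmul, fderiv_eval_apply, integral_const_mul] at hparts
  linarith

/-- Integration by parts has no boundary term against the Gaussian, and polar coordinates turn
Gaussian integrals into integrals over the sphere. -/
lemma sphereIntegral_linForm_mul (v : ι → ℝ) {d : ℕ} {P : MvPolynomial ι ℝ}
    (hP : P.IsHomogeneous d) :
    ((Fintype.card ι : ℝ) + d - 1) * sphereIntegral (linForm v * P) =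
      sphereIntegral (dirDeriv v P) := by
  have hparts := integral_dirDeriv_mul_exp_neg_sq v P
  rw [integral_eval_mul_exp_neg_sq ((isHomogeneous_linForm v).mul hP),
    integral_eval_mul_exp_neg_sq (isHomogeneous_dirDeriv v hP)] at hparts
  have hcard : 1 ≤ Fintype.card ι := Fintype.card_pos
  rcases Nat.eq_zero_or_pos d with rfl | hd
  · rw [dirDeriv_eq_zero_of_isHomogeneous_zero v hP, map_zero, zero_mul, eq_comm, mul_eq_zero,
      mul_eq_zero] at hparts
    rw [dirDeriv_eq_zero_of_isHomogeneous_zero v hP, map_zero,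
      (hparts.resolve_left two_ne_zero).resolve_right (gaussMoment_pos _).ne', mul_zero]
  · obtain ⟨d, rfl⟩ := Nat.exists_eq_add_of_le' hd
    obtain ⟨n, hn⟩ := Nat.exists_eq_add_of_le' hcard
    have hmoment := gaussMoment_add_two (n + d)
    rw [hn, show n + 1 - 1 + (1 + (d + 1)) = n + d + 2 by omega,
      show n + 1 - 1 + (d + 1 - 1) = n + d by omega] at hparts
    refine mul_right_cancel₀ (gaussMoment_pos (n + d)).ne' ?_
    rw [hparts, hn]
    push_cast at hmoment ⊢
    linear_combination (-1) * sphereIntegral (linForm v * P) * hmoment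

end PolynomialIntegral

/-! ### Spherical means of harmonic polynomials along reflections -/

section ReflectionMean

open MvPolynomial

variable {ι : Type*} [Fintype ι]

lemma sphereIntegral_eq_zero_of_polyLaplacian_eq_zero [Nontrivial ι] {d : ℕ} (hd : 0 < d)
    {Y : MvPolynomial ι ℝ} (hY : Y.IsHomogeneous d) (hYL : polyLaplacian Y = 0) :
    sphereIntegral Y = 0 := by
  classical
  have hcard : (1 : ℝ) < Fintype.card ι := by exact_mod_cast Fintype.one_lt_card
  have hd' : (1 : ℝ) ≤ d := by exact_mod_cast hd
  have heuler : (d : ℝ) * sphereIntegral Y = ∑ i, sphereIntegral (X i * pderiv i Y) := by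
    rw [← map_sum, hY.sum_X_mul_pderiv, map_nsmul, nsmul_eq_mul]
  have hparts (i : ι) : ((Fintype.card ι : ℝ) + d - 2) * sphereIntegral (X i * pderiv i Y) =
      sphereIntegral (pderiv i (pderiv i Y)) := by
    have h := sphereIntegral_linForm_mul (Pi.single i 1) (hY.pderiv (i := i))
    rw [linForm_single, dirDeriv_single, Nat.cast_sub hd] at h
    rw [← h]
    push_cast
    ring
  have hlap : ((Fintype.card ι : ℝ) + d - 2) * (d * sphereIntegral Y) = 0 := by
    rw [heuler, Finset.mul_sum, Finset.sum_congr rfl fun i _ => hparts i, ← map_sum,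
      ← polyLaplacian, hYL, map_zero]
  have hpos : 0 < (Fintype.card ι : ℝ) + d - 2 := by linarith
  exact (mul_eq_zero.1 ((mul_eq_zero.1 hlap).resolve_left hpos.ne')).resolve_left (by positivity)

lemma sphereIntegral_linForm_pow_mul_eq_zero [Nontrivial ι] (v : ι → ℝ) {i d : ℕ} (hid : i < d)
    {Y : MvPolynomial ι ℝ} (hY : Y.IsHomogeneous d) (hYL : polyLaplacian Y = 0) :
    sphereIntegral (linForm v ^ i * Y) = 0 := by
  induction i using Nat.strong_induction_on generalizing d Y with
  | _ i ih =>
  rcases i with _ | i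
  · rw [pow_zero, one_mul, sphereIntegral_eq_zero_of_polyLaplacian_eq_zero hid hY hYL]
  · have h := sphereIntegral_linForm_mul v (((isHomogeneous_linForm v).pow i).mul hY)
    rw [dirDeriv_linForm_pow_mul, map_add, sphereIntegral_C_mul,
      ih i (by lia) (by lia) (isHomogeneous_dirDeriv v hY) (polyLaplacian_iterate_dirDeriv v hYL 1),
      ih (i - 1) (by lia) (by lia) hY hYL, ← mul_assoc, ← pow_succ', mul_zero, add_zero] at h
    have hcard : (1 : ℝ) < Fintype.card ι := by exact_mod_cast Fintype.one_lt_card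
    refine (mul_eq_zero.1 h).resolve_left (ne_of_gt ?_)
    push_cast
    linarith [(Nat.cast_nonneg i : (0 : ℝ) ≤ i), (Nat.cast_nonneg d : (0 : ℝ) ≤ d)]

lemma sphereIntegral_linForm_pow_succ_mul [Nontrivial ι] (v : ι → ℝ) {j : ℕ}
    {Y : MvPolynomial ι ℝ} (hY : Y.IsHomogeneous (j + 1)) (hYL : polyLaplacian Y = 0) :
    ((Fintype.card ι : ℝ) + 2 * j) * sphereIntegral (linForm v ^ (j + 1) * Y) =
      sphereIntegral (linForm v ^ j * dirDeriv v Y) := by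
  have h := sphereIntegral_linForm_mul v (((isHomogeneous_linForm v).pow j).mul hY)
  rw [dirDeriv_linForm_pow_mul, map_add, sphereIntegral_C_mul,
    sphereIntegral_linForm_pow_mul_eq_zero v (by lia : j - 1 < j + 1) hY hYL, ← mul_assoc,
    ← pow_succ', mul_zero, add_zero] at h
  rw [← h]
  push_cast
  ring

/-- The contribution of order `j` in `v ⬝ᵥ a` to the spherical mean of `P (v - 2 (v ⬝ᵥ a) a)`. -/
def reflectionTerm (v : ι → ℝ) (P : MvPolynomial ι ℝ) (k j : ℕ) : ℝ :=
  (-2) ^ j / (k - j).factorial * sphereIntegral (linForm v ^ j * (dirDeriv v)^[k - j] P)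

lemma integral_eval_reflection {k : ℕ} {P : MvPolynomial ι ℝ} (hP : P.IsHomogeneous k)
    (v : ι → ℝ) :
    ∫ a, eval (v - (2 * (v ⬝ᵥ a.ofLp)) • a.ofLp) P ∂sphereMeasure (EuclideanSpace ℝ ι) =
      ∑ j ∈ Finset.range (k + 1), reflectionTerm v P k j := by
  have hexpand (a : ι → ℝ) : eval (v - (2 * (v ⬝ᵥ a)) • a) P =
      eval a (∑ j ∈ Finset.range (k + 1),
        C ((-2) ^ j / (k - j).factorial : ℝ) * (linForm v ^ j * (dirDeriv v)^[k - j] P)) := by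
    rw [show v - (2 * (v ⬝ᵥ a)) • a = (-2 * (v ⬝ᵥ a)) • a + v by module,
      eval_add_eq_sum_iterate_dirDeriv hP, ← Finset.sum_flip, map_sum]
    refine Finset.sum_congr rfl fun j hj => ?_
    have hjk : k - (k - j) = j := Nat.sub_sub_self (by simpa [Nat.lt_succ_iff] using hj)
    rw [eval_smul_of_isHomogeneous (isHomogeneous_iterate_dirDeriv v hP _), hjk, map_mul, map_mul,
      map_pow, eval_linForm, eval_C, mul_pow]
    ring
  simp only [hexpand]
  change sphereIntegral _ = _
  simp only [map_sum, sphereIntegral_C_mul, reflectionTerm]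

lemma reflectionTerm_zero {k : ℕ} {P : MvPolynomial ι ℝ} (hP : P.IsHomogeneous k)
    (v : ι → ℝ) : reflectionTerm v P k 0 =
      (sphereMeasure (EuclideanSpace ℝ ι)).real Set.univ * eval v P := by
  rw [reflectionTerm, pow_zero, pow_zero, one_mul, Nat.sub_zero, iterate_dirDeriv_eq_C hP,
    sphereIntegral_C]
  field_simp

lemma reflectionTerm_succ [Nontrivial ι] {k : ℕ} {P : MvPolynomial ι ℝ}
    (hP : P.IsHomogeneous k) (hPL : polyLaplacian P = 0) (v : ι → ℝ) {j : ℕ} (hj : j < k) :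
    ((Fintype.card ι : ℝ) + 2 * j) * reflectionTerm v P k (j + 1) =
      -2 * (k - j) * reflectionTerm v P k j := by
  obtain ⟨i, rfl⟩ := Nat.exists_eq_add_of_lt hj
  have hY := isHomogeneous_iterate_dirDeriv v hP i
  rw [show j + i + 1 - i = j + 1 by lia] at hY
  have h := sphereIntegral_linForm_pow_succ_mul v hY (polyLaplacian_iterate_dirDeriv v hPL i)
  rw [← Function.iterate_succ_apply' (dirDeriv v) i P] at h
  rw [reflectionTerm, reflectionTerm, show j + i + 1 - (j + 1) = i by lia,
    show j + i + 1 - j = i + 1 by lia, ← h, Nat.factorial_succ]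
  push_cast
  field_simp
  ring

lemma mul_sum_range_of_recurrence {R : Type*} [CommRing R] (c : R) {k : ℕ} {T : ℕ → R}
    (hT : ∀ j < k, (c + 2 * j) * T (j + 1) = -2 * (k - j) * T j) :
    (c + 2 * k - 2) * ∑ j ∈ Finset.range (k + 1), T j = (c - 2) * T 0 := by
  have hpartial : ∀ n ≤ k, (c + 2 * k - 2) * ∑ j ∈ Finset.range (n + 1), T j =
      (c - 2) * T 0 + 2 * (k - n) * T n := by
    intro n hn
    induction n with
    | zero => simp only [zero_add, Finset.range_one, Finset.sum_singleton, Nat.cast_zero]; ring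
    | succ n ih =>
      rw [Finset.sum_range_succ, mul_add, ih (by lia)]
      push_cast
      linear_combination hT n (by lia)
  rw [hpartial k le_rfl]
  ring

lemma mul_integral_eval_reflection [Nontrivial ι] {k : ℕ} {P : MvPolynomial ι ℝ}
    (hP : P.IsHomogeneous k) (hPL : polyLaplacian P = 0) (v : ι → ℝ) :
    ((Fintype.card ι : ℝ) + 2 * k - 2) *
        ∫ a, eval (v - (2 * (v ⬝ᵥ a.ofLp)) • a.ofLp) P ∂sphereMeasure (EuclideanSpace ℝ ι) =
      ((Fintype.card ι : ℝ) - 2) *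
        ((sphereMeasure (EuclideanSpace ℝ ι)).real Set.univ * eval v P) := by
  rw [integral_eval_reflection hP, ← reflectionTerm_zero hP,
    mul_sum_range_of_recurrence _ fun j hj => reflectionTerm_succ hP hPL v hj]

end ReflectionMean

/-! ### The space `ℋ_k` and its spherical means -/

section HarmonicSpace

open MvPolynomial

lemma isHomogeneous_of_eval_smul {ι R : Type*} [CommRing R] [IsDomain R] [Infinite R] {k : ℕ}
    {P : MvPolynomial ι R} (hP : ∀ (c : R) (x : ι → R), eval (c • x) P = c ^ k * eval x P) :
    P.IsHomogeneous k := by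
  suffices hcomp : P = homogeneousComponent k P from
    hcomp ▸ homogeneousComponent_isHomogeneous k P
  refine MvPolynomial.funext fun x => ?_
  have hline : ∑ i ∈ Finset.range (P.totalDegree + 1),
      Polynomial.C (eval x (homogeneousComponent i P)) * Polynomial.X ^ i =
        Polynomial.C (eval x P) * Polynomial.X ^ k := by
    refine Polynomial.funext fun c => ?_
    simp only [Polynomial.eval_finsetSum, Polynomial.eval_mul, Polynomial.eval_C,
      Polynomial.eval_pow, Polynomial.eval_X]
    rw [mul_comm (eval x P), ← hP]
    conv_rhs => rw [← sum_homogeneousComponent P, map_sum]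
    refine Finset.sum_congr rfl fun i _ => ?_
    rw [eval_smul_of_isHomogeneous (homogeneousComponent_isHomogeneous i P), mul_comm]
  have hcoeff := congrArg (fun f => f.coeff k) hline
  simp only [Polynomial.finsetSum_coeff, Polynomial.coeff_C_mul, Polynomial.coeff_X_pow,
    mul_ite, mul_one, mul_zero, Finset.sum_ite_eq, if_true] at hcoeff
  rw [← hcoeff, ite_eq_left_iff]
  intro hk
  rw [homogeneousComponent_eq_zero _ _ (by simpa using hk), map_zero]

variable {m k : ℕ}

lemma pdv_eval (i : Fin m) (P : MvPolynomial (Fin m) ℝ) :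
    pdv i (fun x => eval x.ofLp P) = fun x => eval x.ofLp (pderiv i P) := by
  ext x
  rw [pdv, fderiv_eval_apply, PiLp.ofLp_single, dirDeriv_single]

lemma lapl_eval (P : MvPolynomial (Fin m) ℝ) (x : Evec m) :
    lapl (fun x => eval x.ofLp P) x = eval x.ofLp (polyLaplacian P) := by
  simp only [lapl, pdv_eval, polyLaplacian, map_sum]

lemma IsHk.exists_isHomogeneous {q : Evec m → ℝ} (hq : IsHk m k q) :
    ∃ P : MvPolynomial (Fin m) ℝ, P.IsHomogeneous k ∧ polyLaplacian P = 0 ∧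
      q = fun x => eval x.ofLp P := by
  obtain ⟨⟨P, hP⟩, hhom, hlap⟩ := hq
  obtain rfl : q = fun x => eval x.ofLp P := funext hP
  refine ⟨P, isHomogeneous_of_eval_smul fun c x => hhom c (WithLp.toLp 2 x), ?_, rfl⟩
  refine MvPolynomial.funext fun x => ?_
  rw [map_zero, ← hlap (WithLp.toLp 2 x), lapl_eval]

lemma IsHk.continuous {q : Evec m → ℝ} (hq : IsHk m k q) : Continuous q := by
  obtain ⟨P, -, -, rfl⟩ := hq.exists_isHomogeneous
  exact continuous_eval_ofLp P

lemma reflv_of_norm_eq_one {a : Evec m} (ha : ‖a‖ = 1) (u : Evec m) :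
    reflv a u = u - (2 * ⟪a, u⟫) • a := by
  rw [reflv, ha, one_pow, div_one]

lemma mul_integral_reflv (hm : 2 ≤ m) {q : Evec m → ℝ} (hq : IsHk m k q) (v : Evec m) :
    ((m : ℝ) + 2 * k - 2) * ∫ a, q (reflv a v) ∂sphereM m =
      ((m : ℝ) - 2) * (omegaS m * q v) := by
  obtain ⟨P, hP, hPL, rfl⟩ := hq.exists_isHomogeneous
  have : Nontrivial (Fin m) := Fin.nontrivial_iff_two_le.2 hm
  have hmean := mul_integral_eval_reflection hP hPL v.ofLp
  rw [Fintype.card_fin] at hmean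
  refine Eq.trans ?_ hmean
  congr 1
  refine integral_congr_ae ?_
  filter_upwards [ae_norm_eq_one_sphereMeasure (Evec m)] with a ha
  simp [reflv_of_norm_eq_one ha, EuclideanSpace.inner_eq_star_dotProduct]

end HarmonicSpace

/-! ### Asymptotically coinciding measure preserving maps -/

section Coupling

variable {Ω X F : Type*} [MeasurableSpace Ω] [PseudoMetricSpace X] [MeasurableSpace X]
  [NormedAddCommGroup F]

lemma eLpNorm_comp_sub_comp_le [OpensMeasurableSpace X] [SecondCountableTopology X]
    {γ : Measure Ω} {S T : Ω → X} (hS : Measurable S) (hT : Measurable T) {g : X → F}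
    {B ε δ : ℝ} (hB : ∀ x, ‖g x‖ ≤ B) (hε : 0 ≤ ε)
    (hg : ∀ x y, dist x y < δ → dist (g x) (g y) ≤ ε) {p : ENNReal} (hp : 1 ≤ p) :
    eLpNorm (g ∘ S - g ∘ T) p γ ≤ ‖ε‖ₑ * γ Set.univ ^ (1 / p.toReal) +
      ‖2 * B‖ₑ * γ {ω | δ ≤ dist (S ω) (T ω)} ^ (1 / p.toReal) := by
  let far : Set Ω := {ω | δ ≤ dist (S ω) (T ω)}
  let near : Ω → ℝ := Set.univ.indicator fun _ => ε
  have hfar : MeasurableSet far := measurableSet_le measurable_const (hS.dist hT)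
  have hbound (ω : Ω) :
      ‖(g ∘ S - g ∘ T) ω‖ ≤ (near + far.indicator fun _ => 2 * B) ω := by
    by_cases hω : ω ∈ far
    · have hsub := norm_sub_le (g (S ω)) (g (T ω))
      simp only [near, Pi.add_apply, Pi.sub_apply, Function.comp_apply, Set.indicator_univ,
        Set.indicator_of_mem hω]
      linarith [hB (S ω), hB (T ω)]
    · simpa [near, hω, dist_eq_norm] using hg _ _ (not_le.1 hω)
  calc eLpNorm (g ∘ S - g ∘ T) p γ
    _ ≤ eLpNorm (near + far.indicator fun _ => 2 * B) p γ := eLpNorm_mono_real hbound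
    _ ≤ _ := eLpNorm_add_le (measurable_const.indicator .univ).aestronglyMeasurable
      (measurable_const.indicator hfar).aestronglyMeasurable hp
    _ ≤ _ := add_le_add (eLpNorm_indicator_const_le _ _) (eLpNorm_indicator_const_le _ _)

variable [BorelSpace X] [SecondCountableTopology X] {ι : Type*} {l : Filter ι} {μ : Measure X}
  [IsFiniteMeasure μ] {γ : ι → Measure Ω} {S T : ι → Ω → X} {p : ENNReal}

lemma tendsto_eLpNorm_comp_sub_comp_of_uniformContinuous
    (hS : ∀ᶠ i in l, MeasurePreserving (S i) (γ i) μ)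
    (hT : ∀ᶠ i in l, MeasurePreserving (T i) (γ i) μ)
    (hdist : ∀ δ > 0, Tendsto (fun i => γ i {ω | δ ≤ dist (S i ω) (T i ω)}) l (𝓝 0))
    (hp : 1 ≤ p) (hp' : p ≠ ⊤) {g : X → F} (hg : UniformContinuous g) {B : ℝ}
    (hB : ∀ x, ‖g x‖ ≤ B) :
    Tendsto (fun i => eLpNorm (g ∘ S i - g ∘ T i) p (γ i)) l (𝓝 0) := by
  have hp0 : 0 < 1 / p.toReal :=
    one_div_pos.2 (ENNReal.toReal_pos (zero_lt_one.trans_le hp).ne' hp')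
  have hμ : μ Set.univ ^ (1 / p.toReal) ≠ ⊤ :=
    ENNReal.rpow_ne_top_of_nonneg hp0.le (measure_ne_top _ _)
  refine ENNReal.tendsto_nhds_zero.2 fun η hη => ?_
  have hnear : Tendsto (fun ε : ℝ => ‖ε‖ₑ * μ Set.univ ^ (1 / p.toReal)) (𝓝[>] 0) (𝓝 0) := by
    have hε := ENNReal.Tendsto.mul_const (continuous_enorm.tendsto (0 : ℝ)) (Or.inr hμ)
    rw [enorm_zero, zero_mul] at hε
    exact tendsto_nhdsWithin_of_tendsto_nhds hε
  obtain ⟨ε, hεη, hε : 0 < ε⟩ := ((ENNReal.tendsto_nhds_zero.1 hnear (η / 2)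
    (ENNReal.half_pos hη.ne')).and self_mem_nhdsWithin).exists
  obtain ⟨δ, hδ, hgδ⟩ := Metric.uniformContinuous_iff.1 hg ε hε
  have hfar : Tendsto (fun i => ‖2 * B‖ₑ *
      γ i {ω | δ ≤ dist (S i ω) (T i ω)} ^ (1 / p.toReal)) l (𝓝 0) := by
    have hδ0 := ENNReal.Tendsto.const_mul ((hdist δ hδ).ennrpow_const (1 / p.toReal))
      (Or.inr (enorm_ne_top (x := 2 * B)))
    rwa [ENNReal.zero_rpow_of_pos hp0, mul_zero] at hδ0
  filter_upwards [hS, hT, ENNReal.tendsto_nhds_zero.1 hfar (η / 2) (ENNReal.half_pos hη.ne')]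
    with i hSi hTi hi
  have hmass : γ i Set.univ = μ Set.univ := by
    simpa using hSi.measure_preimage MeasurableSet.univ.nullMeasurableSet
  calc _ ≤ _ := eLpNorm_comp_sub_comp_le hSi.measurable hTi.measurable hB hε.le
        (fun x y hxy => (hgδ hxy).le) hp
    _ ≤ η / 2 + η / 2 := by rw [hmass]; gcongr
    _ = η := ENNReal.add_halves η

lemma tendsto_eLpNorm_comp_sub_comp [ProperSpace X] [NormedSpace ℝ F]
    (hS : ∀ᶠ i in l, MeasurePreserving (S i) (γ i) μ)
    (hT : ∀ᶠ i in l, MeasurePreserving (T i) (γ i) μ)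
    (hdist : ∀ δ > 0, Tendsto (fun i => γ i {ω | δ ≤ dist (S i ω) (T i ω)}) l (𝓝 0))
    (hp : 1 ≤ p) (hp' : p ≠ ⊤) {f : X → F} (hf : MemLp f p μ) :
    Tendsto (fun i => eLpNorm (f ∘ S i - f ∘ T i) p (γ i)) l (𝓝 0) := by
  refine ENNReal.tendsto_nhds_zero.2 fun η hη => ?_
  have hη3 : η / 3 ≠ 0 := (ENNReal.div_pos hη.ne' (by simp)).ne'
  obtain ⟨g, hgsupp, hfg, hgcont, hgLp⟩ := hf.exists_hasCompactSupport_eLpNorm_sub_le hp' hη3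
  obtain ⟨B, hB⟩ := hgsupp.exists_bound_of_continuous hgcont
  have hlim := tendsto_eLpNorm_comp_sub_comp_of_uniformContinuous hS hT hdist hp hp'
    (hgsupp.uniformContinuous_of_continuous hgcont) hB
  filter_upwards [hS, hT, ENNReal.tendsto_nhds_zero.1 hlim (η / 3) hη3.bot_lt] with i hSi hTi hi
  have hmeas : AEStronglyMeasurable (f - g) μ := hf.1.sub hgLp.1
  have hmeasS := hmeas.comp_measurePreserving hSi
  have hmeasT := hmeas.comp_measurePreserving hTi
  have hgmeas : AEStronglyMeasurable (g ∘ S i - g ∘ T i) (γ i) :=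
    (hgLp.1.comp_measurePreserving hSi).sub (hgLp.1.comp_measurePreserving hTi)
  calc eLpNorm (f ∘ S i - f ∘ T i) p (γ i)
    _ = eLpNorm ((f - g) ∘ S i - (f - g) ∘ T i + (g ∘ S i - g ∘ T i)) p (γ i) := by
      congr 1
      ext ω
      simp only [Pi.add_apply, Pi.sub_apply, Function.comp_apply]
      abel
    _ ≤ eLpNorm ((f - g) ∘ S i) p (γ i) + eLpNorm ((f - g) ∘ T i) p (γ i) +
        eLpNorm (g ∘ S i - g ∘ T i) p (γ i) :=
      (eLpNorm_add_le (hmeasS.sub hmeasT) hgmeas hp).trans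
        (by gcongr; exact eLpNorm_sub_le hmeasS hmeasT hp)
    _ ≤ η / 3 + η / 3 + η / 3 := by
      rw [eLpNorm_comp_measurePreserving hmeas hSi, eLpNorm_comp_measurePreserving hmeas hTi]
      gcongr
    _ = η := ENNReal.add_thirds η

end Coupling

section DoublyStochastic

variable {X Y : Type*} [MeasurableSpace X] [MeasurableSpace Y] {μ : Measure X} {ν : Measure Y}
  [SFinite ν] {w : X × Y → ENNReal}

lemma measurePreserving_fst_withDensity (hw : Measurable w)
    (hw1 : ∀ᵐ x ∂μ, ∫⁻ y, w (x, y) ∂ν = 1) :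
    MeasurePreserving Prod.fst ((μ.prod ν).withDensity w) μ := by
  refine ⟨measurable_fst, Measure.ext_of_lintegral _ fun f hf => ?_⟩
  rw [lintegral_map hf measurable_fst,
    lintegral_withDensity_eq_lintegral_mul _ hw (by fun_prop),
    lintegral_prod _ (by fun_prop)]
  refine lintegral_congr_ae ?_
  filter_upwards [hw1] with x hx
  simp only [Pi.mul_apply]
  rw [lintegral_mul_const _ (by fun_prop), hx, one_mul]

lemma measurePreserving_snd_withDensity [SFinite μ] (hw : Measurable w)
    (hw1 : ∀ᵐ y ∂ν, ∫⁻ x, w (x, y) ∂μ = 1) :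
    MeasurePreserving Prod.snd ((μ.prod ν).withDensity w) ν := by
  refine ⟨measurable_snd, Measure.ext_of_lintegral _ fun f hf => ?_⟩
  rw [lintegral_map hf measurable_snd,
    lintegral_withDensity_eq_lintegral_mul _ hw (by fun_prop),
    lintegral_prod_symm _ (by fun_prop)]
  refine lintegral_congr_ae ?_
  filter_upwards [hw1] with y hy
  simp only [Pi.mul_apply]
  rw [lintegral_mul_const _ (by fun_prop), hy, one_mul]

end DoublyStochastic

/-! ### The coupling of the sphere with itself by harmonic measure -/

section PoissonCoupling

open Module (finrank)

variable {E : Type*} [NormedAddCommGroup E] [InnerProductSpace ℝ E]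

lemma norm_smul_lt_one {r : ℝ} (hr0 : 0 ≤ r) (hr1 : r < 1) {η : E} (hη : ‖η‖ = 1) :
    ‖r • η‖ < 1 := by
  rwa [norm_smul, hη, Real.norm_of_nonneg hr0, mul_one]

variable [FiniteDimensional ℝ E] [MeasurableSpace E] [BorelSpace E]

variable (E) in
/-- The joint law of `(η, ζ)` with `η` distributed by surface measure and `ζ`, given `η`, by
harmonic measure seen from `r • η`. -/
def poissonCoupling (r : ℝ) : Measure (E × E) :=
  ((sphereMeasure E).prod (sphereMeasure E)).withDensity fun q =>
    ENNReal.ofReal (ballPoissonKernel (r • q.1) q.2)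

instance (r : ℝ) : SFinite (poissonCoupling E r) := by
  unfold poissonCoupling; infer_instance

lemma measurable_ballPoissonKernel_smul (r : ℝ) :
    Measurable fun q : E × E => ballPoissonKernel (r • q.1) q.2 := by
  unfold ballPoissonKernel
  fun_prop

lemma lintegral_poissonCoupling (r : ℝ) {f : E × E → ENNReal} (hf : Measurable f) :
    ∫⁻ q, f q ∂poissonCoupling E r =
      ∫⁻ η, ∫⁻ ζ, f (η, ζ) ∂harmonicMeasure (r • η) ∂sphereMeasure E := by
  have hker := (measurable_ballPoissonKernel_smul (E := E) r).ennreal_ofReal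
  rw [poissonCoupling, lintegral_withDensity_eq_lintegral_mul _ hker hf,
    lintegral_prod _ (by fun_prop)]
  refine lintegral_congr fun η => ?_
  have hη : Measurable (ballPoissonKernel (r • η)) := measurable_ballPoissonKernel.of_uncurry_left
  rw [harmonicMeasure, lintegral_withDensity_eq_lintegral_mul _ (by fun_prop) (by fun_prop)]
  rfl

lemma ballPoissonKernel_smul_comm (r : ℝ) {η ζ : E} (hη : ‖η‖ = 1) (hζ : ‖ζ‖ = 1) :
    ballPoissonKernel (r • η) ζ = ballPoissonKernel (r • ζ) η := by
  have hnorm : ‖r • η - ζ‖ ^ 2 = ‖r • ζ - η‖ ^ 2 := by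
    rw [norm_sub_sq_real, norm_sub_sq_real, real_inner_smul_left, real_inner_smul_left,
      real_inner_comm, norm_smul, norm_smul, hη, hζ]
  rw [pow_left_inj₀ (norm_nonneg _) (norm_nonneg _) two_ne_zero] at hnorm
  simp only [ballPoissonKernel, hnorm, norm_smul, hη, hζ]

lemma lintegral_ballPoissonKernel [Nontrivial E] {x : E} (hx : ‖x‖ < 1) :
    ∫⁻ ζ, ENNReal.ofReal (ballPoissonKernel x ζ) ∂sphereMeasure E = 1 := by
  have := isProbabilityMeasure_harmonicMeasure hx
  simpa [harmonicMeasure] using measure_univ (μ := harmonicMeasure x)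

lemma measurePreserving_fst_poissonCoupling [Nontrivial E] {r : ℝ} (hr0 : 0 ≤ r) (hr1 : r < 1) :
    MeasurePreserving Prod.fst (poissonCoupling E r) (sphereMeasure E) := by
  refine measurePreserving_fst_withDensity
    (measurable_ballPoissonKernel_smul r).ennreal_ofReal ?_
  filter_upwards [ae_norm_eq_one_sphereMeasure E] with η hη
  exact lintegral_ballPoissonKernel (norm_smul_lt_one hr0 hr1 hη)

lemma measurePreserving_snd_poissonCoupling [Nontrivial E] {r : ℝ} (hr0 : 0 ≤ r) (hr1 : r < 1) :
    MeasurePreserving Prod.snd (poissonCoupling E r) (sphereMeasure E) := by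
  refine measurePreserving_snd_withDensity
    (measurable_ballPoissonKernel_smul r).ennreal_ofReal ?_
  filter_upwards [ae_norm_eq_one_sphereMeasure E] with ζ hζ
  rw [← lintegral_ballPoissonKernel (norm_smul_lt_one hr0 hr1 hζ)]
  refine lintegral_congr_ae ?_
  filter_upwards [ae_norm_eq_one_sphereMeasure E] with η hη
  rw [ballPoissonKernel_smul_comm r hη hζ]

lemma ballPoissonKernel_le_of_le_norm_sub {x ζ : E} (hx : ‖x‖ ≤ 1) {ε : ℝ} (hε : 0 < ε)
    (hζ : ε ≤ ‖x - ζ‖) :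
    ballPoissonKernel x ζ ≤
      ((sphereMeasure E).real Set.univ)⁻¹ * ((1 - ‖x‖ ^ 2) / ε ^ finrank ℝ E) := by
  have : 0 ≤ 1 - ‖x‖ ^ 2 := sub_nonneg.2 (pow_le_one₀ (norm_nonneg x) hx)
  unfold ballPoissonKernel
  gcongr

lemma poissonCoupling_le_dist_le {r δ : ℝ} (hr0 : 0 ≤ r) (hr1 : r ≤ 1) (hδ : 0 < δ)
    (hrδ : 1 - r ≤ δ / 2) :
    poissonCoupling E r {q | δ ≤ dist q.2 q.1} ≤
      ENNReal.ofReal (((sphereMeasure E).real Set.univ)⁻¹ *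
        ((1 - r ^ 2) / (δ / 2) ^ finrank ℝ E)) *
        (sphereMeasure E).prod (sphereMeasure E) Set.univ := by
  have hfar : MeasurableSet {q : E × E | δ ≤ dist q.2 q.1} :=
    measurableSet_le measurable_const (by fun_prop)
  rw [poissonCoupling, withDensity_apply _ hfar, ← lintegral_const]
  refine (setLIntegral_mono_ae measurable_const.aemeasurable ?_).trans
    (setLIntegral_le_lintegral _ _)
  filter_upwards [Measure.quasiMeasurePreserving_fst.ae (ae_norm_eq_one_sphereMeasure E)]
    with ⟨η, ζ⟩ hη hfar
  have hnorm : ‖r • η‖ = r := by rw [norm_smul, hη, Real.norm_of_nonneg hr0, mul_one]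
  have hclose : ‖η - r • η‖ = 1 - r := by
    rw [show η - r • η = (1 - r) • η by rw [sub_smul, one_smul], norm_smul, hη,
      mul_one, Real.norm_of_nonneg (sub_nonneg.2 hr1)]
  have hsep : δ / 2 ≤ ‖r • η - ζ‖ := by
    have htri := norm_sub_le_norm_sub_add_norm_sub η (r • η) ζ
    rw [dist_eq_norm, norm_sub_rev] at hfar
    linarith
  refine ENNReal.ofReal_le_ofReal ?_
  simpa only [hnorm] using
    ballPoissonKernel_le_of_le_norm_sub (hnorm.trans_le hr1) (half_pos hδ) hsep

lemma tendsto_poissonCoupling_le_dist {δ : ℝ} (hδ : 0 < δ) :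
    Tendsto (fun r => poissonCoupling E r {q | δ ≤ dist q.2 q.1}) (𝓝[<] 1) (𝓝 0) := by
  let c : ℝ := ((sphereMeasure E).real Set.univ)⁻¹
  have hreal : Tendsto (fun r : ℝ => c * ((1 - r ^ 2) / (δ / 2) ^ finrank ℝ E)) (𝓝[<] 1) (𝓝 0) :=
    tendsto_nhdsWithin_of_tendsto_nhds (Continuous.tendsto' (by fun_prop) _ _ (by simp))
  have hbound := ENNReal.Tendsto.mul_const (ENNReal.tendsto_ofReal hreal)
    (Or.inr (measure_ne_top ((sphereMeasure E).prod (sphereMeasure E)) Set.univ))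
  rw [ENNReal.ofReal_zero, zero_mul] at hbound
  refine tendsto_of_tendsto_of_tendsto_of_le_of_le' tendsto_const_nhds hbound
    (Eventually.of_forall fun _ => zero_le) ?_
  filter_upwards [self_mem_nhdsWithin, nhdsWithin_le_nhds (lt_mem_nhds one_pos),
    nhdsWithin_le_nhds (lt_mem_nhds (sub_lt_self (1 : ℝ) (half_pos hδ)))] with r hr1 hr0 hrδ
  exact poissonCoupling_le_dist_le hr0.le (le_of_lt hr1) hδ (by linarith)

end PoissonCoupling

/-! ### Reflecting the second variable -/

section ReflectionCoupling

variable {m : ℕ}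

instance : IsFiniteMeasure (sphereM m) :=
  inferInstanceAs (IsFiniteMeasure (sphereMeasure (Evec m)))

lemma reflv_eq_reflection (a u : Evec m) :
    reflv a u = (Submodule.span ℝ {a})ᗮ.reflection u := by
  rw [Submodule.reflection_orthogonal_apply, Submodule.reflection_singleton_apply, reflv, two_smul,
    neg_sub, ← two_smul ℝ, smul_smul, mul_div_assoc]
  rfl

lemma reflv_reflv (a u : Evec m) : reflv a (reflv a u) = u := by
  simp only [reflv_eq_reflection, Submodule.reflection_reflection]

lemma norm_reflv (a u : Evec m) : ‖reflv a u‖ = ‖u‖ := by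
  rw [reflv_eq_reflection, LinearIsometryEquiv.norm_map]

lemma reflv_smul {t : ℝ} (ht : t ≠ 0) (a u : Evec m) : reflv (t • a) u = reflv a u := by
  rw [reflv_eq_reflection, reflv_eq_reflection]
  congr! 3
  exact Submodule.span_singleton_smul_eq ht.isUnit a

lemma measurable_reflv : Measurable fun q : Evec m × Evec m => reflv q.1 q.2 := by
  unfold reflv
  fun_prop

lemma map_reflv_sphereM [NeZero m] (a : Evec m) : (sphereM m).map (reflv a) = sphereM m := by
  rw [show reflv a = (Submodule.span ℝ {a})ᗮ.reflection from funext (reflv_eq_reflection a)]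
  exact (measurePreserving_sphereMeasure _).map_eq

/-- The joint law of `(η, ζ)` and an independent uniformly distributed `ν`, where `ζ` is the exit
point of Brownian motion started at `r • η`. -/
def reflectionCoupling (m : ℕ) (r : ℝ) : Measure ((Evec m × Evec m) × Evec m) :=
  (poissonCoupling (Evec m) r).prod (sphereM m)

/-- The exit point `ζ`, with `ν` reflected along `r • η - ζ`. -/
def exitPoint (m : ℕ) (r : ℝ) (q : (Evec m × Evec m) × Evec m) : Evec m × Evec m :=
  (q.1.2, reflv (r • q.1.1 - q.1.2) q.2)

/-- The projected starting point `η`, with `ν` reflected along `r • η - ζ`. -/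
def startPoint (m : ℕ) (r : ℝ) (q : (Evec m × Evec m) × Evec m) : Evec m × Evec m :=
  (q.1.1, reflv (r • q.1.1 - q.1.2) q.2)

lemma measurable_reflv_smul_sub (r : ℝ) :
    Measurable fun q : (Evec m × Evec m) × Evec m => reflv (r • q.1.1 - q.1.2) q.2 :=
  measurable_reflv.comp (by fun_prop :
    Measurable fun q : (Evec m × Evec m) × Evec m => (r • q.1.1 - q.1.2, q.2))

lemma measurable_exitPoint (r : ℝ) : Measurable (exitPoint m r) :=
  Measurable.prodMk (by fun_prop) (measurable_reflv_smul_sub r)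

lemma measurable_startPoint (r : ℝ) : Measurable (startPoint m r) :=
  Measurable.prodMk (by fun_prop) (measurable_reflv_smul_sub r)

variable [NeZero m]

lemma measurePreserving_exitPoint {r : ℝ} (hr0 : 0 ≤ r) (hr1 : r < 1) :
    MeasurePreserving (exitPoint m r) (reflectionCoupling m r) ((sphereM m).prod (sphereM m)) :=
  (measurePreserving_snd_poissonCoupling hr0 hr1).skew_product (measurable_reflv_smul_sub r)
    (Eventually.of_forall fun q => map_reflv_sphereM (r • q.1 - q.2))

lemma measurePreserving_startPoint {r : ℝ} (hr0 : 0 ≤ r) (hr1 : r < 1) :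
    MeasurePreserving (startPoint m r) (reflectionCoupling m r) ((sphereM m).prod (sphereM m)) :=
  (measurePreserving_fst_poissonCoupling hr0 hr1).skew_product (measurable_reflv_smul_sub r)
    (Eventually.of_forall fun q => map_reflv_sphereM (r • q.1 - q.2))

lemma tendsto_eLpNorm_exitPoint_sub_startPoint {p : ENNReal} (hp : 1 ≤ p) (hp' : p ≠ ⊤)
    {f : Evec m × Evec m → ℝ} (hf : MemLp f p ((sphereM m).prod (sphereM m))) :
    Tendsto (fun r => eLpNorm (f ∘ exitPoint m r - f ∘ startPoint m r) p (reflectionCoupling m r))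
      (𝓝[<] 1) (𝓝 0) := by
  have hr0 : ∀ᶠ r : ℝ in 𝓝[<] 1, 0 ≤ r :=
    nhdsWithin_le_nhds ((lt_mem_nhds one_pos).mono fun _ => le_of_lt)
  have hr1 : ∀ᶠ r : ℝ in 𝓝[<] 1, r < 1 := self_mem_nhdsWithin
  refine tendsto_eLpNorm_comp_sub_comp
    (hr0.mp (hr1.mono fun r h1 h0 => measurePreserving_exitPoint h0 h1))
    (hr0.mp (hr1.mono fun r h1 h0 => measurePreserving_startPoint h0 h1))
    (fun δ hδ => ?_) hp hp' hf
  have hset (r : ℝ) : {q | δ ≤ dist (exitPoint m r q) (startPoint m r q)} =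
      {q | δ ≤ dist q.2 q.1} ×ˢ Set.univ := by
    ext q
    simp [exitPoint, startPoint, Prod.dist_eq]
  simp only [hset, reflectionCoupling, Measure.prod_prod]
  have hlim := ENNReal.Tendsto.mul_const (tendsto_poissonCoupling_le_dist (E := Evec m) hδ)
    (Or.inr (measure_ne_top (sphereM m) Set.univ))
  rwa [zero_mul] at hlim

end ReflectionCoupling

/-! ### The boundary values of the Poisson integral -/

section PoissonIntegral

section Jensen

variable {α F : Type*} [MeasurableSpace α] {μ : Measure α} [NormedAddCommGroup F]
  [NormedSpace ℝ F] {f g : α → F}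

lemma enorm_integral_sub_integral_le (hf : AEStronglyMeasurable f μ) (hg : Integrable g μ) :
    ‖∫ x, f x ∂μ - ∫ x, g x ∂μ‖ₑ ≤ ∫⁻ x, ‖f x - g x‖ₑ ∂μ := by
  by_cases hfg : Integrable (f - g) μ
  · have hfi : Integrable f μ := by simpa using hfg.add hg
    rw [← integral_sub hfi hg]
    exact enorm_integral_le_lintegral_enorm _
  · have hinf : ∫⁻ x, ‖f x - g x‖ₑ ∂μ = ⊤ := by
      by_contra hne
      exact hfg ⟨hf.sub hg.1, lt_top_iff_ne_top.2 hne⟩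
    exact hinf ▸ le_top

lemma enorm_integral_sub_integral_rpow_le [IsProbabilityMeasure μ]
    (hf : AEStronglyMeasurable f μ) (hg : Integrable g μ) {p : ℝ} (hp : 1 ≤ p) :
    ‖∫ x, f x ∂μ - ∫ x, g x ∂μ‖ₑ ^ p ≤ ∫⁻ x, ‖f x - g x‖ₑ ^ p ∂μ := by
  have hp0 : 0 < p := zero_lt_one.trans_le hp
  have hmono := eLpNorm'_le_eLpNorm'_of_exponent_le zero_lt_one hp μ (hf.sub hg.1)
  simp only [eLpNorm', ENNReal.rpow_one, div_one, Pi.sub_apply] at hmono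
  rw [← ENNReal.le_rpow_inv_iff hp0, ← one_div]
  exact (enorm_integral_sub_integral_le hf hg).trans hmono

end Jensen

variable {m k : ℕ} {Z : Evec m → Evec m → ℝ}

lemma omegaS_pos [NeZero m] : 0 < omegaS m := measureReal_univ_pos (μ := sphereMeasure (Evec m))

lemma integral_PB_mul [NeZero m] (hZ : IsZk m k Z) {q : Evec m → ℝ} (hq : IsHk m k q)
    (x ζ ν : Evec m) :
    ∫ ω, PB m k Z x ζ ω ν * q ω ∂sphereM m =
      cmk m k / 2 * omegaS m * (ballPoissonKernel x ζ * q (reflv (x - ζ) ν)) := by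
  obtain ⟨-, hrepr, -, -, hinv⟩ := hZ
  have hZrefl (ω : Evec m) : Z (reflv (x - ζ) ω) ν = Z ω (reflv (x - ζ) ν) := by
    nth_rewrite 1 [← reflv_reflv (x - ζ) ν]
    simp only [reflv_eq_reflection, hinv]
  have hω : omegaS m ≠ 0 := omegaS_pos.ne'
  have hker : omegaS m * ballPoissonKernel x ζ = (1 - ‖x‖ ^ 2) / ‖x - ζ‖ ^ m := by
    rw [ballPoissonKernel, finrank_euclideanSpace_fin]
    exact mul_inv_cancel_left₀ hω _
  simp only [PB, hZrefl, mul_assoc, integral_const_mul, hrepr q hq, ← hker]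

lemma PBint_eq_integral_harmonicMeasure [NeZero m] (hZ : IsZk m k Z)
    {h : Evec m → Evec m → ℝ}
    (hh : ∀ ζ, ‖ζ‖ = 1 → ∃ q, IsHk m k q ∧ ∀ ω ∈ closedBall (0 : Evec m) 1, h ζ ω = q ω)
    {x ν : Evec m} (hx : ‖x‖ ≤ 1) (hν : ‖ν‖ = 1) :
    PBint m k Z h x ν =
      cmk m k / 2 * omegaS m * ∫ ζ, h ζ (reflv (x - ζ) ν) ∂harmonicMeasure x := by
  rw [PBint, integral_harmonicMeasure hx, ← integral_const_mul]
  refine integral_congr_ae ?_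
  filter_upwards [ae_norm_eq_one_sphereMeasure (Evec m)] with ζ hζ
  obtain ⟨q, hq, hqh⟩ := hh ζ hζ
  rw [hqh _ (by simp [norm_reflv, hν]), smul_eq_mul, ← integral_PB_mul hZ hq]
  refine integral_congr_ae ?_
  filter_upwards [ae_norm_eq_one_sphereMeasure (Evec m)] with ω hω
  rw [hqh ω (by simp [hω])]

lemma mul_integral_reflv_harmonicMeasure (hm : 3 ≤ m) {q : Evec m → ℝ} (hq : IsHk m k q)
    {x : Evec m} (hx : ‖x‖ < 1) (ν : Evec m) :
    cmk m k / 2 * omegaS m * ∫ ζ, q (reflv (x - ζ) ν) ∂harmonicMeasure x = q ν := by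
  have : NeZero m := ⟨by omega⟩
  have hrefl : Measurable fun a : Evec m => reflv a ν := measurable_reflv.of_uncurry_right
  have huniform : ∫ ζ, q (reflv (x - ζ) ν) ∂harmonicMeasure x =
      (omegaS m)⁻¹ * ∫ a, q (reflv a ν) ∂sphereM m := by
    have hmap := map_sub_harmonicMeasure hx hrefl fun t ht a => reflv_smul ht a ν
    rw [← integral_map (φ := fun ζ => reflv (x - ζ) ν) (by fun_prop)
      hq.continuous.aestronglyMeasurable, hmap, integral_smul_measure,
      integral_map hrefl.aemeasurable hq.continuous.aestronglyMeasurable, ENNReal.toReal_inv]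
    rfl
  have hmean := mul_integral_reflv (by omega) hq ν
  have hω : omegaS m ≠ 0 := omegaS_pos.ne'
  have hm2 : (m : ℝ) - 2 ≠ 0 := by
    have : (3 : ℝ) ≤ m := by exact_mod_cast hm
    linarith
  rw [huniform, cmk]
  field_simp
  linear_combination hmean

lemma integrable_comp_reflv [NeZero m] {q : Evec m → ℝ} (hq : Continuous q) {x : Evec m}
    (hx : ‖x‖ < 1) (ν : Evec m) :
    Integrable (fun ζ => q (reflv (x - ζ) ν)) (harmonicMeasure x) := by
  have := isProbabilityMeasure_harmonicMeasure hx
  have hrefl : Measurable fun a : Evec m => reflv a ν := measurable_reflv.of_uncurry_right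
  obtain ⟨B, hB⟩ := (isCompact_closedBall (0 : Evec m) ‖ν‖).exists_bound_of_continuousOn
    hq.continuousOn
  refine Integrable.of_bound (hq.measurable.comp (hrefl.comp (by fun_prop))).aestronglyMeasurable B
    (Eventually.of_forall fun ζ => hB _ ?_)
  simp [norm_reflv]

lemma enorm_PBint_sub_rpow_le (hm : 3 ≤ m) (hZ : IsZk m k Z) {p : ℝ} (hp : 1 ≤ p)
    {h : Evec m → Evec m → ℝ} (hh : MemLpS m k p h) {x η ν : Evec m} (hx : ‖x‖ < 1)
    (hη : ‖η‖ = 1) (hν : ‖ν‖ = 1) :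
    ‖PBint m k Z h x ν - h η ν‖ₑ ^ p ≤ ‖cmk m k / 2 * omegaS m‖ₑ ^ p *
      ∫⁻ ζ, ‖h ζ (reflv (x - ζ) ν) - h η (reflv (x - ζ) ν)‖ₑ ^ p ∂harmonicMeasure x := by
  have : NeZero m := ⟨by omega⟩
  have := isProbabilityMeasure_harmonicMeasure hx
  obtain ⟨hmeas, hharm, -⟩ := hh
  obtain ⟨q, hq, hqh⟩ := hharm η hη
  have hqrefl (ζ : Evec m) : h η (reflv (x - ζ) ν) = q (reflv (x - ζ) ν) :=
    hqh _ (by simp [norm_reflv, hν])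
  have hrefl : Measurable fun a : Evec m => reflv a ν := measurable_reflv.of_uncurry_right
  have hexit : Measurable fun ζ => h ζ (reflv (x - ζ) ν) :=
    hmeas.comp (by fun_prop : Measurable fun ζ => (ζ, reflv (x - ζ) ν))
  rw [PBint_eq_integral_harmonicMeasure hZ hharm hx.le hν, hqh ν (by simp [hν]),
    ← mul_integral_reflv_harmonicMeasure hm hq hx ν, ← mul_sub, enorm_mul,
    ENNReal.mul_rpow_of_nonneg _ _ (by positivity)]
  simp only [hqrefl]
  gcongr
  exact enorm_integral_sub_integral_rpow_le hexit.aestronglyMeasurable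
    (integrable_comp_reflv hq.continuous hx ν) hp

lemma lintegral_reflectionCoupling {r : ℝ} {f : (Evec m × Evec m) × Evec m → ENNReal}
    (hf : Measurable f) :
    ∫⁻ q, f q ∂reflectionCoupling m r = ∫⁻ η, ∫⁻ ν, ∫⁻ ζ, f ((η, ζ), ν)
      ∂harmonicMeasure (r • η) ∂sphereM m ∂sphereM m := by
  rw [reflectionCoupling, lintegral_prod _ hf.aemeasurable,
    lintegral_poissonCoupling r (by fun_prop)]
  exact lintegral_congr fun η => lintegral_lintegral_swap (by fun_prop)

lemma ofReal_abs_rpow {p : ℝ} (hp : 0 ≤ p) (t : ℝ) : ENNReal.ofReal (|t| ^ p) = ‖t‖ₑ ^ p := by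
  rw [Real.enorm_eq_ofReal_abs, ENNReal.ofReal_rpow_of_nonneg (abs_nonneg t) hp]

lemma MemLpS.memLp {p : ℝ} (hp : 0 < p) {h : Evec m → Evec m → ℝ} (hh : MemLpS m k p h) :
    MemLp (fun q : Evec m × Evec m => h q.1 q.2) (ENNReal.ofReal p)
      ((sphereM m).prod (sphereM m)) := by
  obtain ⟨hmeas, -, hfin⟩ := hh
  refine ⟨hmeas.aestronglyMeasurable, ?_⟩
  rw [eLpNorm_eq_lintegral_rpow_enorm_toReal (by simpa using hp) ENNReal.ofReal_ne_top,
    ENNReal.toReal_ofReal hp.le, lintegral_prod _ (by fun_prop)]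
  simpa only [lpS, ofReal_abs_rpow hp.le] using hfin

lemma lpS_PBint_sub_le (hm : 3 ≤ m) (hZ : IsZk m k Z) {p : ℝ} (hp : 1 ≤ p)
    {h : Evec m → Evec m → ℝ} (hh : MemLpS m k p h) {r : ℝ} (hr0 : 0 ≤ r) (hr1 : r < 1) :
    lpS m p (fun η ν => PBint m k Z h (r • η) ν - h η ν) ≤ ‖cmk m k / 2 * omegaS m‖ₑ *
      eLpNorm ((fun q => h q.1 q.2) ∘ exitPoint m r - (fun q => h q.1 q.2) ∘ startPoint m r)
        (ENNReal.ofReal p) (reflectionCoupling m r) := by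
  have hp0 : 0 < p := zero_lt_one.trans_le hp
  have hexit := hh.1.comp (measurable_exitPoint r)
  have hstart := hh.1.comp (measurable_startPoint r)
  rw [lpS, one_div, ENNReal.rpow_inv_le_iff hp0, ENNReal.mul_rpow_of_nonneg _ _ hp0.le,
    eLpNorm_eq_lintegral_rpow_enorm_toReal (by simpa using hp0) ENNReal.ofReal_ne_top,
    ENNReal.toReal_ofReal hp0.le, one_div, ENNReal.rpow_inv_rpow hp0.ne',
    lintegral_reflectionCoupling ((hexit.sub hstart).enorm.pow_const p),
    ← lintegral_const_mul' _ _ (by finiteness)]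
  refine lintegral_mono_ae ?_
  filter_upwards [ae_norm_eq_one_sphereMeasure (Evec m)] with η hη
  rw [← lintegral_const_mul' _ _ (by finiteness)]
  refine lintegral_mono_ae ?_
  filter_upwards [ae_norm_eq_one_sphereMeasure (Evec m)] with ν hν
  rw [ofReal_abs_rpow hp0.le]
  exact enorm_PBint_sub_rpow_le hm hZ hp hh (norm_smul_lt_one hr0 hr1 hη) hη hν

end PoissonIntegral

/-- `L^p` boundary convergence of the unit-ball Poisson integral. -/
theorem stmt_11 (m k : ℕ) (hm : 3 ≤ m) (hk : 1 ≤ k)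
    (Z : Evec m → Evec m → ℝ) (hZ : IsZk m k Z)
    (p : ℝ) (hp : 1 ≤ p)
    (h : Evec m → Evec m → ℝ) (hh : MemLpS m k p h) :
    Tendsto (fun r : ℝ => lpS m p (fun η ν => PBint m k Z h (r • η) ν - h η ν))
      (𝓝[<] (1 : ℝ)) (𝓝 0) := by
  have : NeZero m := ⟨by omega⟩
  have hcoupling := tendsto_eLpNorm_exitPoint_sub_startPoint (by simpa using hp)
    ENNReal.ofReal_ne_top (hh.memLp (zero_lt_one.trans_le hp))
  have hbound := ENNReal.Tendsto.const_mul hcoupling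
    (Or.inr (enorm_ne_top (x := cmk m k / 2 * omegaS m)))
  rw [mul_zero] at hbound
  refine tendsto_of_tendsto_of_tendsto_of_le_of_le' tendsto_const_nhds hbound
    (Eventually.of_forall fun _ => zero_le) ?_
  filter_upwards [self_mem_nhdsWithin, nhdsWithin_le_nhds (lt_mem_nhds one_pos)] with r hr1 hr0
  exact lpS_PBint_sub_le hm hZ hp hh hr0.le hr1
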